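/- Let (V,E,Ψ) be a strongly connected planar box-like self-affine GIFS satisfying the ROSC, and let (X_v)_{v∈V} be the associated graph-directed self-affine carpet family. Choose any positive weights (p_e) with ∑_{e:i(e)=v} p_e=1 for every v, defining t(0) and γ̂(0). Then for every v∈V the box dimension of X_v exists and dim_B X_v = γ̂(0). -/

import Mathlib

open MeasureTheory Filter Set
open scoped Classical

noncomputable section

namespace LqGIFS

/-! ### Mesh cubes, moment sums, L^q spectra, box dimension -/

/-- Closed cube of the `δ`-mesh of `ℝ`. -/
def meshCube1 (δ : ℝ) (k : ℤ) : Set ℝ := Set.Icc ((k : ℝ) * δ) (((k : ℝ) + 1) * δ)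

/-- Closed cube of the `δ`-mesh of `ℝ²`. -/
def meshCube2 (δ : ℝ) (k : ℤ × ℤ) : Set (ℝ × ℝ) :=
  (Set.Icc ((k.1 : ℝ) * δ) (((k.1 : ℝ) + 1) * δ)) ×ˢ
    (Set.Icc ((k.2 : ℝ) * δ) (((k.2 : ℝ) + 1) * δ))

/-- The moment sum `D_δ^q(ν)` for a measure on `ℝ` (cubes of zero measure are omitted,
so that at `q = 0` this counts the mesh cubes of positive measure). -/
def Dq1 (ν : Measure ℝ) (δ q : ℝ) : ℝ :=
  ∑' k : ℤ, if ν (meshCube1 δ k) = 0 then 0 else (ν (meshCube1 δ k)).toReal ^ q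

/-- The moment sum `D_δ^q(ν)` for a measure on `ℝ²`. -/
def Dq2 (ν : Measure (ℝ × ℝ)) (δ q : ℝ) : ℝ :=
  ∑' k : ℤ × ℤ, if ν (meshCube2 δ k) = 0 then 0 else (ν (meshCube2 δ k)).toReal ^ q

/-- The `L^q`-spectrum of a measure on `ℝ` exists and equals `s` (i.e. upper and lower
`L^q`-spectra coincide and equal `s`). -/
def HasLq1 (ν : Measure ℝ) (q s : ℝ) : Prop :=
  Tendsto (fun δ : ℝ => Real.log (Dq1 ν δ q) / (-Real.log δ))
    (nhdsWithin 0 (Set.Ioi 0)) (nhds s)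

/-- The `L^q`-spectrum of a measure on `ℝ²` exists and equals `s`. -/
def HasLq2 (ν : Measure (ℝ × ℝ)) (q s : ℝ) : Prop :=
  Tendsto (fun δ : ℝ => Real.log (Dq2 ν δ q) / (-Real.log δ))
    (nhdsWithin 0 (Set.Ioi 0)) (nhds s)

/-- Number of closed `δ`-mesh cubes of `ℝ²` meeting `X`. -/
def boxCount (X : Set (ℝ × ℝ)) (δ : ℝ) : ℕ :=
  Set.ncard {k : ℤ × ℤ | (X ∩ meshCube2 δ k).Nonempty}

/-- The box dimension of `X` exists and equals `d`. -/
def HasBoxDim (X : Set (ℝ × ℝ)) (d : ℝ) : Prop :=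
  Tendsto (fun δ : ℝ => Real.log (boxCount X δ) / (-Real.log δ))
    (nhdsWithin 0 (Set.Ioi 0)) (nhds d)

/-! ### Matrices: 1-norm, spectral radius, permutation matrices -/

/-- The 1-norm `‖A‖ = ∑_{i,j} |a_{ij}|` of a square matrix. -/
def mnorm {ι : Type*} [Fintype ι] (A : Matrix ι ι ℝ) : ℝ := ∑ i, ∑ j, |A i j|

/-- The spectral radius of a square real matrix, via the Gelfand formula. -/
def specRad {ι : Type*} [Fintype ι] [DecidableEq ι] (A : Matrix ι ι ℝ) : ℝ :=
  Filter.limsup (fun k : ℕ => (mnorm (A ^ k)) ^ ((k : ℝ)⁻¹)) Filter.atTop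

/-- A square 0-1 matrix with exactly one 1 in each row and each column. -/
def IsPermMatrix {ι : Type*} (Z : Matrix ι ι ℝ) : Prop :=
  (∀ i j, Z i j = 0 ∨ Z i j = 1) ∧ (∀ i, ∃! j, Z i j = 1) ∧ (∀ j, ∃! i, Z i j = 1)

/-! ### Directed graphs -/

/-- Strong connectivity of the finite directed graph with edge set `E`,
initial vertex map `ini` and terminal vertex map `ter`. -/
def GraphSC {V E : Type*} (ini ter : E → V) : Prop :=
  ∀ v v' : V, Relation.TransGen (fun u u' : V => ∃ e, ini e = u ∧ ter e = u') v v'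

/-- The matrix `F^{(q)}_{x,y}` with entry `p_{e'}^q a_{e'}^x b_{e'}^y` at `(e,e')` when
`t(e) = i(e')`, and `0` otherwise. -/
def FmatG {V E : Type*} (ini ter : E → V) (p a b : E → ℝ) (q x y : ℝ) :
    Matrix E E ℝ :=
  fun e e' => if ter e = ini e' then p e' ^ q * a e' ^ x * b e' ^ y else 0

/-- `f` is the entrywise product of the normalized left and right Perron vectors of the
irreducible matrix `F^{(q)}_{x,y(x)}` (spectral radius 1). -/
def IsPerronData {V E : Type*} [Fintype E] [DecidableEq E] (ini ter : E → V)
    (p a b : E → ℝ) (q x yx : ℝ) (f : E → ℝ) : Prop :=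
  specRad (FmatG ini ter p a b q x yx) = 1 ∧
  ∃ u v : E → ℝ, (∀ e, 0 < u e) ∧ (∀ e, 0 < v e) ∧ (∑ e, u e) = 1 ∧
    (FmatG ini ter p a b q x yx).mulVec u = u ∧
    (FmatG ini ter p a b q x yx).vecMul v = v ∧
    (∑ e, v e * u e) = 1 ∧ (∀ e, f e = v e * u e)

/-! ### Planar box-like graph-directed self-affine systems -/

/-- A planar box-like self-affine GIFS: a finite directed graph together with, for each
edge `e`, a contraction `ψ_e(z) = T_e z + t_e` whose linear part is the diagonal matrix
`diag(±a_e, ±b_e)` (when `diag e = true`) or the anti-diagonal matrix with entries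
`±a_e` (top right) and `±b_e` (bottom left) (when `diag e = false`), `0 < a_e, b_e < 1`. -/
structure BoxLikeGIFS (V E : Type*) where
  init : E → V
  term : E → V
  a : E → ℝ
  b : E → ℝ
  sa : E → ℝ
  sb : E → ℝ
  diag : E → Bool
  trans : E → ℝ × ℝ
  a_mem : ∀ e, a e ∈ Set.Ioo (0 : ℝ) 1
  b_mem : ∀ e, b e ∈ Set.Ioo (0 : ℝ) 1
  sa_mem : ∀ e, sa e = 1 ∨ sa e = -1
  sb_mem : ∀ e, sb e = 1 ∨ sb e = -1
  edge_exists : ∀ v, ∃ e, init e = v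

namespace BoxLikeGIFS

variable {V E : Type*}

/-- The contraction `ψ_e`. -/
def map (S : BoxLikeGIFS V E) (e : E) : ℝ × ℝ → ℝ × ℝ := fun z =>
  if S.diag e then
    (S.sa e * S.a e * z.1 + (S.trans e).1, S.sb e * S.b e * z.2 + (S.trans e).2)
  else
    (S.sa e * S.a e * z.2 + (S.trans e).1, S.sb e * S.b e * z.1 + (S.trans e).2)

def StronglyConnected (S : BoxLikeGIFS V E) : Prop := GraphSC S.init S.term

/-- The open unit square `(0,1)²`. -/
def unitSq : Set (ℝ × ℝ) := Set.Ioo (0 : ℝ) 1 ×ˢ Set.Ioo (0 : ℝ) 1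

/-- The rectangular open set condition. -/
def ROSC (S : BoxLikeGIFS V E) : Prop :=
  (∀ e : E, S.map e '' unitSq ⊆ unitSq) ∧
  ∀ e e' : E, e ≠ e' → S.init e = S.init e' →
    Disjoint (S.map e '' unitSq) (S.map e' '' unitSq)

/-- Positive weights summing to one at each vertex. -/
def IsWeights [Fintype E] (S : BoxLikeGIFS V E) (p : E → ℝ) : Prop :=
  (∀ e, 0 < p e) ∧ ∀ v : V, (∑ e : E, if S.init e = v then p e else 0) = 1

/-- `μ` is the associated graph-directed box-like self-affine measure family. -/
def IsGDMeasure [Fintype E] (S : BoxLikeGIFS V E) (p : E → ℝ)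
    (μ : V → Measure (ℝ × ℝ)) : Prop :=
  (∀ v, IsProbabilityMeasure (μ v)) ∧
  ∀ v : V, μ v =
    ∑ e : E, if S.init e = v then
      ENNReal.ofReal (p e) • ((μ (S.term e)).map (S.map e)) else (0 : Measure (ℝ × ℝ))

/-- `X` is the associated graph-directed self-affine carpet family. -/
def IsGDAttractor (S : BoxLikeGIFS V E) (X : V → Set (ℝ × ℝ)) : Prop :=
  (∀ v, (X v).Nonempty ∧ IsCompact (X v)) ∧
  ∀ v : V, X v = ⋃ e : E, ⋃ _ : S.init e = v, S.map e '' X (S.term e)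

/-- The matrix `F^{(q)}_{x,y}` of the system. -/
def Fmat (S : BoxLikeGIFS V E) (p : E → ℝ) (q x y : ℝ) : Matrix E E ℝ :=
  FmatG S.init S.term p S.a S.b q x y

/-- The `(2#E) × (2#E)` block matrix `𝒢^{(q)}_{x,y}`, indexed by `E × Bool`
(`false` = first index of the block, `true` = second). -/
def Gmat (S : BoxLikeGIFS V E) (p : E → ℝ) (τx τy : V → ℝ) (q x y : ℝ) :
    Matrix (E × Bool) (E × Bool) ℝ := fun i j =>
  if S.term i.1 = S.init j.1 then
    if S.diag j.1 then
      if i.2 = false ∧ j.2 = false then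
        p j.1 ^ q * S.a j.1 ^ (x + τx (S.term j.1)) * S.b j.1 ^ (y - τx (S.term j.1))
      else if i.2 = true ∧ j.2 = true then
        p j.1 ^ q * S.b j.1 ^ (x + τy (S.term j.1)) * S.a j.1 ^ (y - τy (S.term j.1))
      else 0
    else
      if i.2 = false ∧ j.2 = true then
        p j.1 ^ q * S.a j.1 ^ (x + τy (S.term j.1)) * S.b j.1 ^ (y - τy (S.term j.1))
      else if i.2 = true ∧ j.2 = false then
        p j.1 ^ q * S.b j.1 ^ (x + τx (S.term j.1)) * S.a j.1 ^ (y - τx (S.term j.1))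
      else 0
  else 0

/-! ### Words -/

/-- An admissible word: consecutive edges are composable. -/
def Admissible (S : BoxLikeGIFS V E) (w : List E) : Prop :=
  List.Chain' (fun e e' => S.term e = S.init e') w

/-- `(c_w, d_w)`: width and height of the rectangle `ψ_w([0,1]²)`. -/
def wdims (S : BoxLikeGIFS V E) : List E → ℝ × ℝ
  | [] => (1, 1)
  | e :: w =>
      if S.diag e then (S.a e * (wdims S w).1, S.b e * (wdims S w).2)
      else (S.a e * (wdims S w).2, S.b e * (wdims S w).1)

/-- Whether `T_w` is diagonal (`true`) or anti-diagonal (`false`). -/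
def wordDiag (S : BoxLikeGIFS V E) : List E → Bool
  | [] => true
  | e :: w => S.diag e == wordDiag S w

/-- The larger singular value `α₁(w) = max(c_w, d_w)` of `T_w`. -/
def alpha1 (S : BoxLikeGIFS V E) (w : List E) : ℝ := max (S.wdims w).1 (S.wdims w).2

/-- The smaller singular value `α₂(w) = min(c_w, d_w)` of `T_w`. -/
def alpha2 (S : BoxLikeGIFS V E) (w : List E) : ℝ := min (S.wdims w).1 (S.wdims w).2

/-- Initial vertex of a (nonempty) word. -/
def wordInit [Nonempty V] (S : BoxLikeGIFS V E) (w : List E) : V :=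
  (w.head?.map S.init).getD (Classical.arbitrary V)

/-- Terminal vertex of a (nonempty) word. -/
def wordTerm [Nonempty V] (S : BoxLikeGIFS V E) (w : List E) : V :=
  (w.getLast?.map S.term).getD (Classical.arbitrary V)

/-- `p_w = p_{w_1} ⋯ p_{w_k}`. -/
def wordProb (p : E → ℝ) (w : List E) : ℝ := (w.map p).prod

/-- `τ_w(q)`: given the values `τx v`, `τy v` of the `L^q`-spectra of the two coordinate
projections of `μ_v`, this is the `L^q`-spectrum of the projection of `μ_{t(w)} ∘ ψ_w⁻¹`
onto the longest side of `ψ_w([0,1]²)`, i.e. `τx (t w)` if `π_w = π_x` and `τy (t w)`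
otherwise. -/
def wordTau [Nonempty V] (S : BoxLikeGIFS V E) (τx τy : V → ℝ) (w : List E) : ℝ :=
  if ((S.wdims w).2 ≤ (S.wdims w).1 ↔ S.wordDiag w = true) then τx (S.wordTerm w)
  else τy (S.wordTerm w)

/-- The modified singular value function
`φ^{s,q}(w) = p_w^q α₁(w)^{τ_w(q)} α₂(w)^{s - τ_w(q)}`. -/
def msvf [Nonempty V] (S : BoxLikeGIFS V E) (p : E → ℝ) (τx τy : V → ℝ)
    (s q : ℝ) (w : List E) : ℝ :=
  wordProb p w ^ q * S.alpha1 w ^ (S.wordTau τx τy w) *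
    S.alpha2 w ^ (s - S.wordTau τx τy w)

/-- The modified singular value function matrix `A_k^{s,q}`. -/
def Amat [Nonempty V] [Fintype E] (S : BoxLikeGIFS V E) (p : E → ℝ) (τx τy : V → ℝ)
    (s q : ℝ) (k : ℕ) : Matrix V V ℝ := fun v v' =>
  ∑ f : Fin k → E,
    if S.Admissible (List.ofFn f) ∧ S.wordInit (List.ofFn f) = v ∧
        S.wordTerm (List.ofFn f) = v'
    then S.msvf p τx τy s q (List.ofFn f) else 0

/-- The family `E^*_δ` of admissible words whose shortest side drops below `δ`
exactly at the last letter. -/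
def EstarDelta (S : BoxLikeGIFS V E) (δ : ℝ) : Set (List E) :=
  {w | w ≠ [] ∧ S.Admissible w ∧ S.alpha2 w < δ ∧ δ ≤ S.alpha2 w.dropLast}

end BoxLikeGIFS

/-! ### Partition of the projections, for the splitting proposition -/

/-- The projection family: `(v, false) ↦ μ_v^x` and `(v, true) ↦ μ_v^y`. -/
def projMeas {V : Type*} (μ : V → Measure (ℝ × ℝ)) (i : V × Bool) : Measure ℝ :=
  if i.2 then (μ i.1).map Prod.snd else (μ i.1).map Prod.fst

/-- `A`, `B` is a partition of the projection family `{μ_v^x, μ_v^y}_v` into two disjoint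
families of cardinality `#V`, on each of which the `L^q`-spectra exist and share a common
value, and which splits `{μ_v^x, μ_v^y}` for each `v`. -/
def GoodPartition {V : Type*} [Fintype V] (μ : V → Measure (ℝ × ℝ))
    (A B : Finset (V × Bool)) : Prop :=
  Disjoint A B ∧ A ∪ B = Finset.univ ∧
  A.card = Fintype.card V ∧ B.card = Fintype.card V ∧
  ∃ τA τB : ℝ → ℝ,
    (∀ q : ℝ, 0 ≤ q → ∀ i ∈ A, HasLq1 (projMeas μ i) q (τA q)) ∧
    (∀ q : ℝ, 0 ≤ q → ∀ i ∈ B, HasLq1 (projMeas μ i) q (τB q)) ∧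
    ∀ v : V, ((v, false) ∈ A ∧ (v, true) ∈ B) ∨ ((v, false) ∈ B ∧ (v, true) ∈ A)

end LqGIFS

end

open LqGIFS MeasureTheory Filter Set

namespace LqGIFS

section Spectral

variable {ι : Type*} [Fintype ι]

lemma mnorm_nonneg (A : Matrix ι ι ℝ) : 0 ≤ mnorm A :=
  Finset.sum_nonneg fun _ _ => Finset.sum_nonneg fun _ _ => abs_nonneg _

lemma mnorm_mul_le (A B : Matrix ι ι ℝ) : mnorm (A * B) ≤ mnorm A * mnorm B := by
  have hrow : ∀ j, ∑ k, |B j k| ≤ mnorm B := fun j =>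
    Finset.single_le_sum (f := fun j => ∑ k, |B j k|)
      (fun _ _ => Finset.sum_nonneg fun _ _ => abs_nonneg _) (Finset.mem_univ j)
  calc mnorm (A * B) ≤ ∑ i, ∑ k, ∑ j, |A i j| * |B j k| := by
        refine Finset.sum_le_sum fun i _ => Finset.sum_le_sum fun k _ => ?_
        rw [Matrix.mul_apply]
        refine (Finset.abs_sum_le_sum_abs _ _).trans (le_of_eq ?_)
        simp [abs_mul]
    _ = ∑ i, ∑ j, |A i j| * ∑ k, |B j k| := by
        refine Finset.sum_congr rfl fun i _ => ?_
        rw [Finset.sum_comm]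
        simp [Finset.mul_sum]
    _ ≤ ∑ i, ∑ j, |A i j| * mnorm B :=
        Finset.sum_le_sum fun i _ => Finset.sum_le_sum fun j _ =>
          mul_le_mul_of_nonneg_left (hrow j) (abs_nonneg _)
    _ = mnorm A * mnorm B := by simp [mnorm, Finset.sum_mul]

variable [DecidableEq ι]

lemma mnorm_pow_succ_le (A : Matrix ι ι ℝ) (k : ℕ) : mnorm (A ^ (k + 1)) ≤ mnorm A ^ (k + 1) := by
  induction k with
  | zero => simp
  | succ k ih =>
    rw [pow_succ, pow_succ (mnorm A)]
    exact (mnorm_mul_le _ _).trans (mul_le_mul_of_nonneg_right ih (mnorm_nonneg _))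

lemma mnorm_root_isBoundedUnder (A : Matrix ι ι ℝ) :
    IsBoundedUnder (· ≤ ·) atTop (fun k : ℕ => (mnorm (A ^ k)) ^ ((k : ℝ)⁻¹)) := by
  refine isBoundedUnder_of_eventually_le (a := mnorm A) ?_
  filter_upwards [eventually_ge_atTop 1] with k hk
  obtain ⟨m, rfl⟩ : ∃ m, k = m + 1 := ⟨k - 1, by omega⟩
  calc (mnorm (A ^ (m + 1))) ^ (((m + 1 : ℕ) : ℝ)⁻¹)
      ≤ (mnorm A ^ (m + 1)) ^ (((m + 1 : ℕ) : ℝ)⁻¹) :=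
        Real.rpow_le_rpow (mnorm_nonneg _) (mnorm_pow_succ_le A m) (by positivity)
    _ = mnorm A := Real.pow_rpow_inv_natCast (mnorm_nonneg _) (by omega)

lemma mnorm_root_isCoboundedUnder (A : Matrix ι ι ℝ) :
    IsCoboundedUnder (· ≤ ·) atTop (fun k : ℕ => (mnorm (A ^ k)) ^ ((k : ℝ)⁻¹)) :=
  IsBoundedUnder.isCoboundedUnder_le (isBoundedUnder_of_eventually_ge (a := 0)
    (Eventually.of_forall fun _ => Real.rpow_nonneg (mnorm_nonneg _) _))

lemma pow_entry_nonneg {A : Matrix ι ι ℝ} (hA : ∀ i j, 0 ≤ A i j) (k : ℕ) :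
    ∀ i j, 0 ≤ (A ^ k) i j := by
  induction k with
  | zero => intro i j; rw [pow_zero, Matrix.one_apply]; split_ifs <;> norm_num
  | succ k ih =>
    intro i j
    rw [pow_succ, Matrix.mul_apply]
    exact Finset.sum_nonneg fun l _ => mul_nonneg (ih _ _) (hA _ _)

/-- A nonnegative matrix of spectral radius one, scaled by `θ < 1`, has a positive
supersolution. -/
theorem exists_supersolution {A : Matrix ι ι ℝ} (hA : ∀ i j, 0 ≤ A i j) (hρ : specRad A = 1)
    {θ : ℝ} (hθ0 : 0 < θ) (hθ1 : θ < 1) :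
    ∃ u : ι → ℝ, (∀ i, 1 ≤ u i) ∧ ∀ i, θ * (A.mulVec u) i ≤ u i := by
  have hc : specRad A < θ⁻¹ := by rw [hρ]; exact (one_lt_inv₀ hθ0).2 hθ1
  obtain ⟨n, hn1, hn⟩ := ((eventually_ge_atTop 1).and
    (eventually_lt_of_limsup_lt hc (mnorm_root_isBoundedUnder A))).exists
  have hnorm : θ ^ n * mnorm (A ^ n) ≤ 1 := by
    have h1 : mnorm (A ^ n) ≤ (θ⁻¹) ^ n := by
      rw [← Real.rpow_inv_natCast_pow (mnorm_nonneg (A ^ n)) (by omega : n ≠ 0)]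
      exact pow_le_pow_left₀ (Real.rpow_nonneg (mnorm_nonneg _) _) hn.le n
    calc θ ^ n * mnorm (A ^ n) ≤ θ ^ n * (θ⁻¹) ^ n :=
          mul_le_mul_of_nonneg_left h1 (by positivity)
      _ = 1 := by rw [← mul_pow, mul_inv_cancel₀ hθ0.ne', one_pow]
  set B : Matrix ι ι ℝ := θ • A with hB
  have hB0 : ∀ i j, 0 ≤ B i j := fun i j => mul_nonneg hθ0.le (hA i j)
  have hBn : ∀ i, (B ^ n).mulVec 1 i ≤ 1 := by
    intro i
    refine le_trans ?_ hnorm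
    rw [hB, smul_pow]
    simp only [Matrix.mulVec, dotProduct, Matrix.smul_apply, smul_eq_mul, Pi.one_apply, mul_one]
    rw [← Finset.mul_sum]
    refine mul_le_mul_of_nonneg_left ?_ (by positivity)
    refine (Finset.sum_le_sum fun j _ => le_abs_self _).trans ?_
    exact Finset.single_le_sum (f := fun i => ∑ k, |(A ^ n) i k|)
      (fun _ _ => Finset.sum_nonneg fun _ _ => abs_nonneg _) (Finset.mem_univ i)
  have hBk : ∀ k i, 0 ≤ (B ^ k).mulVec 1 i := fun k i =>
    Finset.sum_nonneg fun j _ => mul_nonneg (pow_entry_nonneg hB0 k i j) zero_le_one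
  refine ⟨fun i => ∑ k ∈ Finset.range n, (B ^ k).mulVec 1 i, fun i => ?_, fun i => ?_⟩
  · have := Finset.single_le_sum (f := fun k => (B ^ k).mulVec 1 i) (fun k _ => hBk k i)
      (Finset.mem_range.2 (by omega : 0 < n))
    simpa using this
  · have hu : (fun i => ∑ k ∈ Finset.range n, (B ^ k).mulVec 1 i)
        = ∑ k ∈ Finset.range n, (B ^ k).mulVec 1 := by
      ext i; simp
    have h1 : θ * (A.mulVec (∑ k ∈ Finset.range n, (B ^ k).mulVec 1)) i
        = ∑ k ∈ Finset.range n, (B ^ (k + 1)).mulVec 1 i := by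
      have : θ * (A.mulVec (∑ k ∈ Finset.range n, (B ^ k).mulVec 1)) i
          = (B.mulVec (∑ k ∈ Finset.range n, (B ^ k).mulVec 1)) i := by
        rw [hB, Matrix.smul_mulVec]; rfl
      rw [this, Matrix.mulVec_sum, Finset.sum_apply]
      refine Finset.sum_congr rfl fun k _ => ?_
      rw [Matrix.mulVec_mulVec, pow_succ']
    have h2 := Finset.sum_range_succ (fun k => (B ^ k).mulVec 1 i) n
    have h3 := Finset.sum_range_succ' (fun k => (B ^ k).mulVec 1 i) n
    have h4 : (B ^ 0).mulVec 1 i = 1 := by simp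
    rw [hu, h1, Finset.sum_apply]
    linarith [hBn i]

attribute [local instance] Matrix.linftyOpNormedRing Matrix.linftyOpNormedAlgebra

lemma mnorm_le_card_mul_norm (A : Matrix ι ι ℝ) :
    mnorm A ≤ Fintype.card ι * ‖A.map (Complex.ofRealHom)‖ := by
  have hrow : ∀ i, ∑ j, |A i j| ≤ ‖A.map (Complex.ofRealHom)‖ := by
    intro i
    rw [Matrix.linfty_opNorm_def]
    have := Finset.le_sup (f := fun i => ∑ j, ‖(A.map Complex.ofRealHom) i j‖₊) (Finset.mem_univ i)
    have h2 := NNReal.coe_le_coe.2 this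
    refine le_trans (le_of_eq ?_) h2
    push_cast
    simp
  calc mnorm A ≤ ∑ _i : ι, ‖A.map (Complex.ofRealHom)‖ := Finset.sum_le_sum fun i _ => hrow i
    _ = _ := by simp

/-- A nonnegative matrix of spectral radius one has a nonzero nonnegative subsolution. -/
theorem exists_subsolution {A : Matrix ι ι ℝ} (hA : ∀ i j, 0 ≤ A i j) (hρ : specRad A = 1) :
    ∃ h : ι → ℝ, (∀ i, 0 ≤ h i) ∧ (∃ i, 0 < h i) ∧ ∀ i, h i ≤ (A.mulVec h) i := by
  have hne : Nonempty ι := by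
    by_contra hcon
    rw [not_nonempty_iff] at hcon
    have h0 : (fun k : ℕ => (mnorm (A ^ k)) ^ ((k : ℝ)⁻¹)) =ᶠ[atTop] fun _ => (0 : ℝ) := by
      filter_upwards [eventually_ge_atTop 1] with k hk
      have : (k : ℝ)⁻¹ ≠ 0 := by positivity
      simp [mnorm, Real.zero_rpow this]
    have h1 : specRad A = 0 := by
      unfold specRad; rw [limsup_congr h0]; simp
    linarith
  set C : Matrix ι ι ℂ := A.map Complex.ofRealHom with hC
  have hCk : ∀ k, C ^ k = (A ^ k).map Complex.ofRealHom := fun k => by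
    rw [hC]; exact (map_pow (Complex.ofRealHom.mapMatrix) A k).symm
  have hrad : 1 ≤ spectralRadius ℂ C := by
    by_contra hlt
    rw [not_le] at hlt
    obtain ⟨r, hr1, hr2⟩ := ENNReal.lt_iff_exists_nnreal_btwn.1 hlt
    have hr2' : (r : ℝ) < 1 := by exact_mod_cast hr2
    have hev := (spectrum.pow_nnnorm_pow_one_div_tendsto_nhds_spectralRadius C).eventually
      (gt_mem_nhds hr1)
    have hn : Tendsto (fun k : ℕ => ((Fintype.card ι : ℝ)) ^ ((k : ℝ)⁻¹) * (r : ℝ)) atTop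
        (nhds ((Fintype.card ι : ℝ) ^ (0 : ℝ) * r)) := by
      refine Tendsto.mul_const _ ?_
      refine Tendsto.rpow tendsto_const_nhds tendsto_inv_atTop_nhds_zero_nat ?_
      left; exact_mod_cast Fintype.card_ne_zero
    rw [Real.rpow_zero, one_mul] at hn
    obtain ⟨c, hc1, hc2⟩ := exists_between hr2'
    have hle : specRad A ≤ c := by
      refine limsup_le_of_le (mnorm_root_isCoboundedUnder A) ?_
      filter_upwards [hev, hn.eventually (gt_mem_nhds hc1), eventually_ge_atTop 1] with k h1 h2 hk
      have hkpos : (0 : ℝ) < (k : ℝ) := by exact_mod_cast hk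
      have h3 : ‖C ^ k‖ ^ ((k : ℝ)⁻¹) ≤ r := by
        have h4 : (‖C ^ k‖₊ ^ ((k : ℝ)⁻¹) : NNReal) < r := by
          rw [← ENNReal.coe_lt_coe, ENNReal.coe_rpow_of_nonneg _ (by positivity)]
          simpa using h1
        exact_mod_cast h4.le
      calc (mnorm (A ^ k)) ^ ((k : ℝ)⁻¹)
          ≤ (Fintype.card ι * ‖C ^ k‖) ^ ((k : ℝ)⁻¹) := by
            refine Real.rpow_le_rpow (mnorm_nonneg _) ?_ (by positivity)
            rw [hCk]; exact mnorm_le_card_mul_norm _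
        _ = (Fintype.card ι : ℝ) ^ ((k : ℝ)⁻¹) * ‖C ^ k‖ ^ ((k : ℝ)⁻¹) :=
            Real.mul_rpow (by positivity) (norm_nonneg _)
        _ ≤ (Fintype.card ι : ℝ) ^ ((k : ℝ)⁻¹) * r :=
            mul_le_mul_of_nonneg_left h3 (by positivity)
        _ ≤ c := h2.le
    linarith
  obtain ⟨z, hz, hzr⟩ := spectrum.exists_nnnorm_eq_spectralRadius C
  have hz1 : 1 ≤ ‖z‖ := by
    rw [← hzr] at hrad
    exact_mod_cast hrad
  have hdet : (algebraMap ℂ (Matrix ι ι ℂ) z - C).det = 0 := by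
    rw [spectrum.mem_iff, Matrix.isUnit_iff_isUnit_det, isUnit_iff_ne_zero, not_not] at hz
    exact hz
  obtain ⟨x, hx0, hx⟩ := Matrix.exists_mulVec_eq_zero_iff.2 hdet
  rw [Matrix.sub_mulVec, sub_eq_zero] at hx
  refine ⟨fun i => ‖x i‖, fun i => norm_nonneg _, ?_, fun i => ?_⟩
  · obtain ⟨i, hi⟩ := Function.ne_iff.1 hx0
    exact ⟨i, norm_pos_iff.2 hi⟩
  · have h1 : z * x i = ∑ j, C i j * x j := by
      have := congrFun hx i
      rw [Algebra.algebraMap_eq_smul_one, Matrix.smul_mulVec, Matrix.one_mulVec] at this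
      simpa [Matrix.mulVec, dotProduct] using this
    calc ‖x i‖ ≤ ‖z‖ * ‖x i‖ := le_mul_of_one_le_left (norm_nonneg _) hz1
      _ = ‖∑ j, C i j * x j‖ := by rw [← h1, norm_mul]
      _ ≤ ∑ j, ‖C i j * x j‖ := norm_sum_le _ _
      _ = (A.mulVec fun i => ‖x i‖) i := by
        simp only [Matrix.mulVec, dotProduct]
        refine Finset.sum_congr rfl fun j _ => ?_
        rw [norm_mul, hC]
        simp [abs_of_nonneg (hA i j)]

end Spectral

/-- The coordinates of a point of the plane, `false` being the first one. -/
def coord (i : Bool) (z : ℝ × ℝ) : ℝ := if i then z.2 else z.1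

/-- The point with `i`-th coordinate `x` and other coordinate `y`. -/
def mkPt (i : Bool) (x y : ℝ) : ℝ × ℝ := if i then (y, x) else (x, y)

@[simp] lemma coord_mkPt_self (i : Bool) (x y : ℝ) : coord i (mkPt i x y) = x := by
  cases i <;> rfl

@[simp] lemma coord_mkPt_not (i : Bool) (x y : ℝ) : coord (!i) (mkPt i x y) = y := by
  cases i <;> rfl

lemma forall_bool_iff (i : Bool) {P : Bool → Prop} : (∀ j, P j) ↔ P i ∧ P (!i) := by
  cases i <;> simp [Bool.forall_bool, and_comm]

lemma continuous_coord (i : Bool) : Continuous (coord i) := by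
  cases i
  · exact continuous_fst
  · exact continuous_snd

lemma dist_le_iff_coord {x y : ℝ × ℝ} {r : ℝ} :
    dist x y ≤ r ↔ ∀ i, |coord i x - coord i y| ≤ r := by
  simp [Prod.dist_eq, Bool.forall_bool, coord, Real.dist_eq]

/-- `F` is a finite set of centres of `2δ`-boxes covering `X`. -/
def IsCover (X : Set (ℝ × ℝ)) (δ : Bool → ℝ) (F : Finset (ℝ × ℝ)) : Prop :=
  ∀ x ∈ X, ∃ z ∈ F, ∀ i, |coord i x - coord i z| ≤ δ i

/-- `F` is a finite set of centres of `δ`-boxes in the unit square, with pairwise disjoint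
interiors, all of which meet `X`. -/
structure IsPacking (X : Set (ℝ × ℝ)) (δ : Bool → ℝ) (F : Finset (ℝ × ℝ)) : Prop where
  inside : ∀ z ∈ F, ∀ i, δ i / 2 ≤ coord i z ∧ coord i z ≤ 1 - δ i / 2
  meets : ∀ z ∈ F, ∃ x ∈ X, ∀ i, |coord i x - coord i z| ≤ δ i / 2
  separated : ∀ z ∈ F, ∀ z' ∈ F, z ≠ z' → ∃ i, δ i ≤ |coord i z - coord i z'|

/-- The integer cell of side `δ` containing a point. -/
noncomputable def cell (δ : ℝ) (z : ℝ × ℝ) : ℤ × ℤ := (⌊z.1 / δ⌋, ⌊z.2 / δ⌋)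

lemma floor_div_near {δ x z : ℝ} (hδ : 0 < δ) (h : |x - z| ≤ δ / 2) :
    ⌊z / δ⌋ ∈ Finset.Icc (⌊x / δ⌋ - 1) (⌊x / δ⌋ + 1) := by
  rw [abs_le] at h
  have h1 : z / δ ≤ x / δ + 1 := by
    rw [div_add_one hδ.ne']; gcongr; linarith
  have h2 : x / δ - 1 ≤ z / δ := by
    rw [div_sub_one hδ.ne']; gcongr; linarith
  rw [Finset.mem_Icc]
  constructor
  · rw [← Int.floor_sub_one]; exact Int.floor_le_floor h2
  · rw [← Int.floor_add_one]; exact Int.floor_le_floor h1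

lemma mem_meshCube2_cell {δ : ℝ} (hδ : 0 < δ) (x : ℝ × ℝ) : x ∈ meshCube2 δ (cell δ x) := by
  refine ⟨⟨?_, ?_⟩, ⟨?_, ?_⟩⟩
  · exact (le_div_iff₀ hδ).1 (Int.floor_le _)
  · exact (div_le_iff₀ hδ).1 (Int.lt_floor_add_one _).le
  · exact (le_div_iff₀ hδ).1 (Int.floor_le _)
  · exact (div_le_iff₀ hδ).1 (Int.lt_floor_add_one _).le

lemma mem_Icc_floor_of_near {δ x z : ℝ} (hδ : 0 < δ) {k : ℤ} (h : |x - z| ≤ δ)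
    (hk1 : (k : ℝ) * δ ≤ x) (hk2 : x ≤ ((k : ℝ) + 1) * δ) :
    k ∈ Finset.Icc (⌊z / δ⌋ - 2) (⌊z / δ⌋ + 2) := by
  rw [abs_le] at h
  have h1 : z / δ - 2 ≤ k := by
    rw [sub_le_iff_le_add, div_le_iff₀ hδ]; nlinarith
  have h2 : (k : ℝ) ≤ z / δ + 1 := by
    rw [← sub_le_iff_le_add, le_div_iff₀ hδ]; nlinarith
  have h3 := Int.floor_le (z / δ)
  have h4 := Int.lt_floor_add_one (z / δ)
  rw [Finset.mem_Icc]
  constructor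
  · have : ((⌊z / δ⌋ - 2 : ℤ) : ℝ) ≤ k := by push_cast; linarith
    exact_mod_cast this
  · have : (k : ℝ) < ((⌊z / δ⌋ + 2 : ℤ) : ℝ) := by push_cast; linarith
    exact (by exact_mod_cast this : k < _).le

lemma IsCover.boxSet_subset {X : Set (ℝ × ℝ)} {δ : ℝ} (hδ : 0 < δ) {F : Finset (ℝ × ℝ)}
    (hF : IsCover X (fun _ => δ) F) :
    {k : ℤ × ℤ | (X ∩ meshCube2 δ k).Nonempty} ⊆
      (F.biUnion fun z => Finset.Icc ((cell δ z).1 - 2) ((cell δ z).1 + 2) ×ˢ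
        Finset.Icc ((cell δ z).2 - 2) ((cell δ z).2 + 2) : Finset (ℤ × ℤ)) := by
  rintro k ⟨x, hx, ⟨h1, h2⟩, ⟨h3, h4⟩⟩
  obtain ⟨z, hz, hxz⟩ := hF x hx
  rw [Finset.coe_biUnion, mem_iUnion₂]
  refine ⟨z, hz, ?_⟩
  rw [Finset.mem_coe, Finset.mem_product]
  exact ⟨mem_Icc_floor_of_near hδ (hxz false) h1 h2, mem_Icc_floor_of_near hδ (hxz true) h3 h4⟩

lemma IsCover.boxCount_le {X : Set (ℝ × ℝ)} {δ : ℝ} (hδ : 0 < δ) {F : Finset (ℝ × ℝ)}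
    (hF : IsCover X (fun _ => δ) F) : (boxCount X δ : ℝ) ≤ 25 * F.card := by
  have h := Set.ncard_le_ncard (hF.boxSet_subset hδ) (Finset.finite_toSet _)
  rw [Set.ncard_coe_finset] at h
  have h2 := h.trans (Finset.card_biUnion_le_card_mul F _ 25 fun z _ => by
    rw [Finset.card_product, Int.card_Icc, Int.card_Icc]
    ring_nf; decide)
  have h3 : (boxCount X δ : ℝ) ≤ ((F.card * 25 : ℕ) : ℝ) := by exact_mod_cast h2
  push_cast at h3
  linarith

lemma boxSet_finite {X : Set (ℝ × ℝ)} {δ : ℝ} (hδ : 0 < δ) {F : Finset (ℝ × ℝ)}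
    (hF : IsCover X (fun _ => δ) F) :
    {k : ℤ × ℤ | (X ∩ meshCube2 δ k).Nonempty}.Finite :=
  (Finset.finite_toSet _).subset (hF.boxSet_subset hδ)

lemma abs_sub_lt_of_floor_div_eq {δ x y : ℝ} (hδ : 0 < δ) (h : ⌊x / δ⌋ = ⌊y / δ⌋) :
    |x - y| < δ := by
  have h1 := Int.abs_sub_lt_one_of_floor_eq_floor h
  rwa [← sub_div, abs_div, abs_of_pos hδ, div_lt_one hδ] at h1

lemma IsPacking.card_le {X : Set (ℝ × ℝ)} {δ : ℝ} (hδ : 0 < δ) {F : Finset (ℝ × ℝ)}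
    (hF : IsPacking X (fun _ => δ) F)
    (hfin : {k : ℤ × ℤ | (X ∩ meshCube2 δ k).Nonempty}.Finite) :
    (F.card : ℝ) ≤ 9 * boxCount X δ := by
  have hinj : Set.InjOn (cell δ) F := by
    intro z hz z' hz' heq
    by_contra hne
    obtain ⟨i, hi⟩ := hF.separated z hz z' hz' hne
    have h1 := congrArg Prod.fst heq
    have h2 := congrArg Prod.snd heq
    cases i
    · exact absurd (abs_sub_lt_of_floor_div_eq hδ h1) (not_lt.2 hi)
    · exact absurd (abs_sub_lt_of_floor_div_eq hδ h2) (not_lt.2 hi)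
  have hsub : F.image (cell δ) ⊆ hfin.toFinset.biUnion fun m =>
      Finset.Icc (m.1 - 1) (m.1 + 1) ×ˢ Finset.Icc (m.2 - 1) (m.2 + 1) := by
    intro k hk
    obtain ⟨z, hz, rfl⟩ := Finset.mem_image.1 hk
    obtain ⟨x, hx, hxz⟩ := hF.meets z hz
    rw [Finset.mem_biUnion]
    refine ⟨cell δ x, ?_, ?_⟩
    · rw [Set.Finite.mem_toFinset]
      exact ⟨x, hx, mem_meshCube2_cell hδ x⟩
    · rw [Finset.mem_product]
      exact ⟨floor_div_near hδ (hxz false), floor_div_near hδ (hxz true)⟩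
  have h := Finset.card_le_card hsub
  rw [Finset.card_image_of_injOn hinj] at h
  have h2 := h.trans (Finset.card_biUnion_le_card_mul _ _ 9 fun z _ => by
    rw [Finset.card_product, Int.card_Icc, Int.card_Icc]
    ring_nf; decide)
  rw [← Set.ncard_eq_toFinset_card _ hfin] at h2
  have h3 : (F.card : ℝ) ≤ ((boxCount X δ * 9 : ℕ) : ℝ) := by exact_mod_cast h2
  push_cast at h3
  linarith

namespace BoxLikeGIFS

variable {V E : Type*} (S : BoxLikeGIFS V E)

/-- The contraction ratio of `ψ_e` onto the `i`-th axis. -/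
def len (i : Bool) (e : E) : ℝ := if i then S.b e else S.a e

/-- The sign of `ψ_e` onto the `i`-th axis. -/
def sgn (i : Bool) (e : E) : ℝ := if i then S.sb e else S.sa e

/-- The axis mapped by `T_e` to the `i`-th axis. -/
def turn (e : E) (i : Bool) : Bool := if S.diag e then i else !i

/-- The dimensions of the preimage under `ψ_e` of a box with dimensions `δ`. -/
noncomputable def rescale (e : E) (δ : Bool → ℝ) : Bool → ℝ :=
  fun j => δ (S.turn e j) / S.len (S.turn e j) e

@[simp] lemma turn_turn (e : E) (i : Bool) : S.turn e (S.turn e i) = i := by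
  unfold turn; split_ifs <;> simp

@[simp] lemma turn_not (e : E) (i : Bool) : S.turn e (!i) = !(S.turn e i) := by
  unfold turn; split_ifs <;> simp

@[simp] lemma rescale_turn (e : E) (δ : Bool → ℝ) (i : Bool) :
    S.rescale e δ (S.turn e i) = δ i / S.len i e := by
  simp [rescale]

lemma forall_turn (e : E) {P : Bool → Prop} : (∀ j, P j) ↔ ∀ i, P (S.turn e i) :=
  ⟨fun h i => h _, fun h j => by simpa using h (S.turn e j)⟩

lemma len_pos (i : Bool) (e : E) : 0 < S.len i e := by
  cases i
  · exact (S.a_mem e).1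
  · exact (S.b_mem e).1

lemma len_lt_one (i : Bool) (e : E) : S.len i e < 1 := by
  cases i
  · exact (S.a_mem e).2
  · exact (S.b_mem e).2

lemma abs_sgn (i : Bool) (e : E) : |S.sgn i e| = 1 := by
  cases i
  · rcases S.sa_mem e with h | h <;> simp [sgn, h]
  · rcases S.sb_mem e with h | h <;> simp [sgn, h]

lemma coord_map (i : Bool) (e : E) (z : ℝ × ℝ) :
    coord i (S.map e z) =
      S.sgn i e * S.len i e * coord (S.turn e i) z + coord i (S.trans e) := by
  unfold map turn
  cases i <;> by_cases h : S.diag e = true <;> simp [h, coord, sgn, len]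

lemma abs_coord_map_sub (i : Bool) (e : E) (z w : ℝ × ℝ) :
    |coord i (S.map e z) - coord i (S.map e w)| =
      S.len i e * |coord (S.turn e i) z - coord (S.turn e i) w| := by
  rw [coord_map, coord_map,
    show ∀ a b x y t : ℝ, a * b * x + t - (a * b * y + t) = a * (b * (x - y)) by intros; ring,
    abs_mul, abs_mul, abs_sgn, one_mul, abs_of_pos (S.len_pos i e)]

lemma continuous_map (e : E) : Continuous (S.map e) := by
  unfold map
  by_cases h : S.diag e = true <;> simp only [h, if_true, Bool.false_eq_true, if_false] <;> fun_prop

lemma exists_len_bounds [Finite E] [Nonempty E] :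
    ∃ lo hi : ℝ, 0 < lo ∧ lo < 1 ∧ 0 < hi ∧ hi < 1 ∧ ∀ i e, lo ≤ S.len i e ∧ S.len i e ≤ hi := by
  obtain ⟨j, hj⟩ := Finite.exists_min (fun x : Bool × E => S.len x.1 x.2)
  obtain ⟨k, hk⟩ := Finite.exists_max (fun x : Bool × E => S.len x.1 x.2)
  exact ⟨_, _, S.len_pos j.1 j.2, S.len_lt_one j.1 j.2, S.len_pos k.1 k.2, S.len_lt_one k.1 k.2,
    fun i e => ⟨hj (i, e), hk (i, e)⟩⟩

variable {S}

lemma dist_map_le {hi : ℝ} (hhi0 : 0 ≤ hi) (hhi : ∀ i e, S.len i e ≤ hi) (e : E) (x y : ℝ × ℝ) :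
    dist (S.map e x) (S.map e y) ≤ hi * dist x y := by
  rw [dist_le_iff_coord]
  intro i
  rw [abs_coord_map_sub]
  exact mul_le_mul (hhi i e) (dist_le_iff_coord.1 le_rfl _) (abs_nonneg _) hhi0

lemma mem_unitSq_iff {z : ℝ × ℝ} : z ∈ unitSq ↔ ∀ i, 0 < coord i z ∧ coord i z < 1 := by
  simp [unitSq, Bool.forall_bool, coord, Set.mem_prod]

lemma mem_closure_unitSq_iff {z : ℝ × ℝ} :
    z ∈ closure unitSq ↔ ∀ i, 0 ≤ coord i z ∧ coord i z ≤ 1 := by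
  rw [unitSq, closure_prod_eq, closure_Ioo (by norm_num), Set.mem_prod]
  simp only [Bool.forall_bool, coord, mem_Icc, if_true, Bool.false_eq_true, if_false]

lemma ROSC.map_mem_closure (h : S.ROSC) (e : E) {z : ℝ × ℝ} (hz : z ∈ closure unitSq) :
    S.map e z ∈ closure unitSq :=
  closure_mono (h.1 e) (image_closure_subset_closure_image (S.continuous_map e) ⟨z, hz, rfl⟩)

lemma IsGDAttractor.exists_preimage {X : V → Set (ℝ × ℝ)} (hX : S.IsGDAttractor X) {v : V}
    {x : ℝ × ℝ} (hx : x ∈ X v) : ∃ e, S.init e = v ∧ ∃ y ∈ X (S.term e), S.map e y = x := by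
  rw [hX.2 v] at hx
  simpa using hx

lemma IsGDAttractor.map_mem {X : V → Set (ℝ × ℝ)} (hX : S.IsGDAttractor X) (e : E)
    {y : ℝ × ℝ} (hy : y ∈ X (S.term e)) : S.map e y ∈ X (S.init e) := by
  rw [hX.2 (S.init e)]
  simp only [mem_iUnion]
  exact ⟨e, rfl, y, hy, rfl⟩

lemma IsGDAttractor.subset_closure_unitSq [Finite V] [Finite E] [Nonempty E]
    {X : V → Set (ℝ × ℝ)} (hX : S.IsGDAttractor X) (h : S.ROSC) (v : V) :
    X v ⊆ closure unitSq := by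
  obtain ⟨lo, hi, -, -, hi0, hi1, hlen⟩ := S.exists_len_bounds
  have hbdd : Bornology.IsBounded (⋃ v, X v) :=
    (isCompact_iUnion fun v => (hX.1 v).2).isBounded
  obtain ⟨R, hR⟩ := hbdd.subset_closedBall ((1 / 2, 1 / 2) : ℝ × ℝ)
  have hc : ((1 / 2, 1 / 2) : ℝ × ℝ) ∈ closure unitSq :=
    mem_closure_unitSq_iff.2 fun i => by cases i <;> norm_num [coord]
  have key : ∀ n : ℕ, ∀ v, ∀ x ∈ X v, ∃ q ∈ closure unitSq, dist x q ≤ hi ^ n * R := by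
    intro n
    induction n with
    | zero =>
      intro v x hx
      refine ⟨_, hc, ?_⟩
      simpa using hR (mem_iUnion.2 ⟨v, hx⟩)
    | succ n ih =>
      intro v x hx
      obtain ⟨e, -, y, hy, rfl⟩ := hX.exists_preimage hx
      obtain ⟨q, hq, hd⟩ := ih _ y hy
      refine ⟨S.map e q, h.map_mem_closure e hq, (dist_map_le hi0.le (fun i e => (hlen i e).2)
        e y q).trans ?_⟩
      rw [pow_succ', mul_assoc]
      exact mul_le_mul_of_nonneg_left hd hi0.le
  intro x hx
  rw [← closure_closure, Metric.mem_closure_iff]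
  intro ε hε
  have ht : Tendsto (fun n : ℕ => hi ^ n * R) atTop (nhds (0 * R)) :=
    (tendsto_pow_atTop_nhds_zero_of_lt_one hi0.le hi1).mul_const R
  rw [zero_mul] at ht
  obtain ⟨n, hn⟩ := (ht.eventually (gt_mem_nhds hε)).exists
  obtain ⟨q, hq, hd⟩ := key n v x hx
  exact ⟨q, hq, hd.trans_lt hn⟩

lemma IsCover.image_map {X : Set (ℝ × ℝ)} {δ : Bool → ℝ} {e : E} {F : Finset (ℝ × ℝ)}
    (hF : IsCover X (S.rescale e δ) F) : IsCover (S.map e '' X) δ (F.image (S.map e)) := by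
  rintro _ ⟨y, hy, rfl⟩
  obtain ⟨z, hz, hyz⟩ := hF y hy
  refine ⟨S.map e z, Finset.mem_image_of_mem _ hz, fun i => ?_⟩
  have := hyz (S.turn e i)
  rw [rescale_turn, le_div_iff₀ (S.len_pos i e), mul_comm] at this
  rwa [abs_coord_map_sub]

lemma map_injective (e : E) : Function.Injective (S.map e) := by
  intro x y hxy
  rw [← dist_le_zero, dist_le_iff_coord, S.forall_turn e]
  intro i
  have h := S.abs_coord_map_sub i e x y
  rw [hxy, sub_self, abs_zero] at h
  rcases mul_eq_zero.1 h.symm with h | h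
  · exact absurd h (S.len_pos i e).ne'
  · exact h.le

/-- The image under `ψ_e` of a box of a packing lies in `ψ_e` of the open square. -/
lemma openBox_subset_image_unitSq {δ : Bool → ℝ} {e : E} {z : ℝ × ℝ}
    (hz : ∀ i, S.rescale e δ i / 2 ≤ coord i z ∧ coord i z ≤ 1 - S.rescale e δ i / 2)
    {w : ℝ × ℝ} (hw : ∀ i, |coord i w - coord i (S.map e z)| < δ i / 2) :
    w ∈ S.map e '' unitSq := by
  have hsq : ∀ i, S.sgn i e * S.sgn i e = 1 := fun i => by
    rw [← abs_mul_abs_self, abs_sgn, one_mul]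
  let y : Bool → ℝ := fun j => S.sgn (S.turn e j) e *
    (coord (S.turn e j) w - coord (S.turn e j) (S.trans e)) / S.len (S.turn e j) e
  have hmap : S.map e (mkPt false (y false) (y true)) = w := by
    have hy : ∀ j, coord j (mkPt false (y false) (y true)) = y j := by
      intro j; cases j <;> rfl
    rw [← dist_le_zero, dist_le_iff_coord]
    intro i
    have hl := (S.len_pos i e).ne'
    rw [coord_map, hy]
    simp only [y, turn_turn]
    rw [show S.sgn i e * S.len i e * (S.sgn i e * (coord i w - coord i (S.trans e)) / S.len i e)
      = (S.sgn i e * S.sgn i e) * (coord i w - coord i (S.trans e)) by field_simp, hsq]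
    simp
  refine ⟨_, ?_, hmap⟩
  rw [mem_unitSq_iff, S.forall_turn e]
  intro i
  have h1 := hw i
  rw [← hmap, abs_coord_map_sub] at h1
  have h2 := hz (S.turn e i)
  rw [rescale_turn] at h2
  have h3 : |coord (S.turn e i) (mkPt false (y false) (y true)) - coord (S.turn e i) z|
      < δ i / S.len i e / 2 := by
    rw [div_right_comm, lt_div_iff₀ (S.len_pos i e), mul_comm]; exact h1
  rw [abs_lt] at h3
  constructor <;> linarith

lemma box_image_inside (h : S.ROSC) {δ : Bool → ℝ} {e : E} {z : ℝ × ℝ} (hδ : ∀ i, 0 < δ i)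
    (hz : ∀ i, S.rescale e δ i / 2 ≤ coord i z ∧ coord i z ≤ 1 - S.rescale e δ i / 2) (i : Bool) :
    δ i / 2 ≤ coord i (S.map e z) ∧ coord i (S.map e z) ≤ 1 - δ i / 2 := by
  have key : ∀ s : ℝ, |s| < δ i / 2 → 0 < coord i (S.map e z) + s ∧
      coord i (S.map e z) + s < 1 := by
    intro s hs
    have := openBox_subset_image_unitSq (S := S) hz
      (w := mkPt i (coord i (S.map e z) + s) (coord (!i) (S.map e z))) (by
        rw [forall_bool_iff i]
        simp [hs, hδ])
    have h2 := mem_unitSq_iff.1 (h.1 e this) i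
    simpa using h2
  constructor
  · by_contra! hlt
    by_cases h0 : 0 < coord i (S.map e z)
    · have := (key (-coord i (S.map e z)) (by rw [abs_neg, abs_of_pos h0]; exact hlt)).1
      linarith
    · have := (key 0 (by simpa using half_pos (hδ i))).1
      linarith
  · by_contra! hlt
    by_cases h0 : coord i (S.map e z) < 1
    · have := (key (1 - coord i (S.map e z)) (by
        rw [abs_of_pos (by linarith)]; linarith)).2
      linarith
    · have := (key 0 (by simpa using half_pos (hδ i))).2
      linarith

lemma separated_of_ne_edge (h : S.ROSC) {δ : Bool → ℝ} {e e' : E} (hee : e ≠ e')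
    (hsame : S.init e = S.init e') {z z' : ℝ × ℝ}
    (hz : ∀ i, S.rescale e δ i / 2 ≤ coord i z ∧ coord i z ≤ 1 - S.rescale e δ i / 2)
    (hz' : ∀ i, S.rescale e' δ i / 2 ≤ coord i z' ∧ coord i z' ≤ 1 - S.rescale e' δ i / 2) :
    ∃ i, δ i ≤ |coord i (S.map e z) - coord i (S.map e' z')| := by
  by_contra! hcon
  let m : ℝ × ℝ := mkPt false ((coord false (S.map e z) + coord false (S.map e' z')) / 2)
    ((coord true (S.map e z) + coord true (S.map e' z')) / 2)
  have hm : ∀ i, coord i m = (coord i (S.map e z) + coord i (S.map e' z')) / 2 := by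
    intro i; cases i <;> rfl
  have h1 : m ∈ S.map e '' unitSq := openBox_subset_image_unitSq hz fun i => by
    have := hcon i
    rw [abs_lt] at this
    rw [hm, abs_lt]
    constructor <;> linarith
  have h2 : m ∈ S.map e' '' unitSq := openBox_subset_image_unitSq hz' fun i => by
    have := hcon i
    rw [abs_lt] at this
    rw [hm, abs_lt]
    constructor <;> linarith
  exact Set.disjoint_left.1 (h.2 e e' hee hsame) h1 h2

lemma IsPacking.image_map (h : S.ROSC) {X : Set (ℝ × ℝ)} {δ : Bool → ℝ} (hδ : ∀ i, 0 < δ i)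
    {e : E} {F : Finset (ℝ × ℝ)} (hF : IsPacking X (S.rescale e δ) F) :
    IsPacking (S.map e '' X) δ (F.image (S.map e)) where
  inside := by
    intro w hw
    obtain ⟨z, hz, rfl⟩ := Finset.mem_image.1 hw
    exact box_image_inside h hδ (hF.inside z hz)
  meets := by
    intro w hw
    obtain ⟨z, hz, rfl⟩ := Finset.mem_image.1 hw
    obtain ⟨x, hx, hxz⟩ := hF.meets z hz
    refine ⟨_, ⟨x, hx, rfl⟩, fun i => ?_⟩
    have := hxz (S.turn e i)
    rw [rescale_turn, div_right_comm, le_div_iff₀ (S.len_pos i e), mul_comm] at this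
    rwa [abs_coord_map_sub]
  separated := by
    intro w hw w' hw' hne
    obtain ⟨z, hz, rfl⟩ := Finset.mem_image.1 hw
    obtain ⟨z', hz', rfl⟩ := Finset.mem_image.1 hw'
    obtain ⟨j, hj⟩ := hF.separated z hz z' hz' fun h => hne (by rw [h])
    obtain ⟨i, rfl⟩ : ∃ i, j = S.turn e i := ⟨S.turn e j, by simp⟩
    refine ⟨i, ?_⟩
    rw [rescale_turn, div_le_iff₀ (S.len_pos i e), mul_comm] at hj
    rwa [abs_coord_map_sub]

lemma _root_.LqGIFS.IsPacking.mono {X Y : Set (ℝ × ℝ)} (hXY : X ⊆ Y) {δ : Bool → ℝ}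
    {F : Finset (ℝ × ℝ)} (hF : IsPacking X δ F) : IsPacking Y δ F where
  inside := hF.inside
  meets := fun z hz => by
    obtain ⟨x, hx, h⟩ := hF.meets z hz
    exact ⟨x, hXY hx, h⟩
  separated := hF.separated

lemma IsGDAttractor.exists_packing_of_term {X : V → Set (ℝ × ℝ)} (hX : S.IsGDAttractor X)
    (h : S.ROSC) {δ : Bool → ℝ} (hδ : ∀ i, 0 < δ i) {e : E} {F : Finset (ℝ × ℝ)}
    (hF : IsPacking (X (S.term e)) (S.rescale e δ) F) :
    ∃ F' : Finset (ℝ × ℝ), IsPacking (X (S.init e)) δ F' ∧ F'.card = F.card := by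
  refine ⟨F.image (S.map e), (IsPacking.image_map h hδ hF).mono ?_,
    Finset.card_image_of_injective _ (map_injective e)⟩
  rintro _ ⟨y, hy, rfl⟩
  exact hX.map_mem e hy

lemma IsGDAttractor.exists_cover_sum [Fintype E] {X : V → Set (ℝ × ℝ)} (hX : S.IsGDAttractor X)
    {δ : Bool → ℝ} {v : V} (F : E → Finset (ℝ × ℝ))
    (hF : ∀ e, S.init e = v → IsCover (X (S.term e)) (S.rescale e δ) (F e)) :
    ∃ F' : Finset (ℝ × ℝ), IsCover (X v) δ F' ∧
      F'.card ≤ ∑ e with S.init e = v, (F e).card := by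
  refine ⟨(Finset.univ.filter fun e => S.init e = v).biUnion fun e => (F e).image (S.map e),
    fun x hx => ?_, ?_⟩
  · obtain ⟨e, he, y, hy, rfl⟩ := hX.exists_preimage hx
    obtain ⟨z, hz, hd⟩ := IsCover.image_map (hF e he) _ ⟨y, hy, rfl⟩
    exact ⟨z, Finset.mem_biUnion.2 ⟨e, by simp [he], hz⟩, hd⟩
  · exact Finset.card_biUnion_le.trans (Finset.sum_le_sum fun e _ => Finset.card_image_le)

lemma IsGDAttractor.exists_packing_sum [Fintype E] {X : V → Set (ℝ × ℝ)}
    (hX : S.IsGDAttractor X) (h : S.ROSC) {δ : Bool → ℝ} (hδ : ∀ i, 0 < δ i) {v : V}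
    (F : E → Finset (ℝ × ℝ))
    (hF : ∀ e, S.init e = v → IsPacking (X (S.term e)) (S.rescale e δ) (F e)) :
    ∃ F' : Finset (ℝ × ℝ), IsPacking (X v) δ F' ∧
      F'.card = ∑ e with S.init e = v, (F e).card := by
  have hsep : ∀ e e', S.init e = v → S.init e' = v → e ≠ e' → ∀ z ∈ F e, ∀ z' ∈ F e',
      ∃ i, δ i ≤ |coord i (S.map e z) - coord i (S.map e' z')| :=
    fun e e' he he' hne z hz z' hz' => separated_of_ne_edge h hne (he.trans he'.symm)
      ((hF e he).inside z hz) ((hF e' he').inside z' hz')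
  refine ⟨(Finset.univ.filter fun e => S.init e = v).biUnion fun e => (F e).image (S.map e),
    ⟨fun w hw => ?_, fun w hw => ?_, fun w hw w' hw' hne => ?_⟩, ?_⟩
  · obtain ⟨e, he, hw⟩ := Finset.mem_biUnion.1 hw
    exact (IsPacking.image_map h hδ (hF e (by simpa using he))).inside w hw
  · obtain ⟨e, he, hwe⟩ := Finset.mem_biUnion.1 hw
    obtain rfl : S.init e = v := by simpa using he
    obtain ⟨_, ⟨y, hy, rfl⟩, hd⟩ := (IsPacking.image_map h hδ (hF e rfl)).meets w hwe
    exact ⟨_, hX.map_mem e hy, hd⟩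
  · obtain ⟨e, he, hw⟩ := Finset.mem_biUnion.1 hw
    obtain ⟨e', he', hw'⟩ := Finset.mem_biUnion.1 hw'
    have he1 : S.init e = v := by simpa using he
    have he2 : S.init e' = v := by simpa using he'
    by_cases hee : e = e'
    · subst hee
      exact (IsPacking.image_map h hδ (hF e he1)).separated w hw w' hw' hne
    · obtain ⟨z, hz, rfl⟩ := Finset.mem_image.1 hw
      obtain ⟨z', hz', rfl⟩ := Finset.mem_image.1 hw'
      exact hsep e e' he1 he2 hee z hz z' hz'
  · rw [Finset.card_biUnion]
    · exact Finset.sum_congr rfl fun e _ => Finset.card_image_of_injective _ (map_injective e)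
    · intro e he e' he' hne
      rw [Function.onFun, Finset.disjoint_left]
      intro w hw hw'
      obtain ⟨z, hz, rfl⟩ := Finset.mem_image.1 hw
      obtain ⟨z', hz', heq⟩ := Finset.mem_image.1 hw'
      obtain ⟨i, hi⟩ := hsep e e' (by simpa using he) (by simpa using he') hne z hz z' hz'
      rw [heq, sub_self, abs_zero] at hi
      exact absurd (hδ i) (not_lt.2 hi)

end BoxLikeGIFS

/-! ### Supports of graph-directed measures -/

namespace BoxLikeGIFS

variable {V E : Type*} [Fintype E] {S : BoxLikeGIFS V E} {X : V → Set (ℝ × ℝ)} {p : E → ℝ}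
  {μ : V → Measure (ℝ × ℝ)}

lemma IsGDMeasure.apply (hμ : S.IsGDMeasure p μ) (v : V) {A : Set (ℝ × ℝ)}
    (hA : MeasurableSet A) :
    μ v A = ∑ e with S.init e = v, ENNReal.ofReal (p e) * μ (S.term e) (S.map e ⁻¹' A) := by
  rw [hμ.2 v, Measure.finsetSum_apply, Finset.sum_filter]
  refine Finset.sum_congr rfl fun e _ => ?_
  split_ifs
  · rw [Measure.smul_apply, Measure.map_apply (S.continuous_map e).measurable hA, smul_eq_mul]
  · simp

lemma IsWeights.sum_ofReal (hp : S.IsWeights p) (v : V) :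
    ∑ e with S.init e = v, ENNReal.ofReal (p e) = 1 := by
  rw [← ENNReal.ofReal_sum_of_nonneg fun e _ => (hp.1 e).le, Finset.sum_filter, hp.2 v,
    ENNReal.ofReal_one]

lemma IsGDMeasure.le_apply (hp : S.IsWeights p) (hμ : S.IsGDMeasure p μ) {v : V}
    {A : Set (ℝ × ℝ)} (hA : MeasurableSet A) {c : ENNReal}
    (h : ∀ e, S.init e = v → c ≤ μ (S.term e) (S.map e ⁻¹' A)) : c ≤ μ v A := by
  rw [hμ.apply v hA]
  calc c = ∑ e with S.init e = v, ENNReal.ofReal (p e) * c := by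
        rw [← Finset.sum_mul, hp.sum_ofReal, one_mul]
    _ ≤ _ := Finset.sum_le_sum fun e he => by
        gcongr
        exact h e (by simpa using he)

lemma IsGDAttractor.map_mem_cthickening {V E : Type*} {S : BoxLikeGIFS V E}
    {X : V → Set (ℝ × ℝ)} (hX : S.IsGDAttractor X) {hi r : ℝ} (hi0 : 0 ≤ hi)
    (hr : 0 ≤ r) (hlen : ∀ i e, S.len i e ≤ hi) (e : E) {y : ℝ × ℝ}
    (hy : y ∈ Metric.cthickening r (X (S.term e))) :
    S.map e y ∈ Metric.cthickening (hi * r) (X (S.init e)) := by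
  rw [(hX.1 _).2.cthickening_eq_biUnion_closedBall hr] at hy
  obtain ⟨x, hx, hyx⟩ := mem_iUnion₂.1 hy
  refine Metric.mem_cthickening_of_dist_le _ (S.map e x) _ _ (hX.map_mem e hx) ?_
  exact (dist_map_le hi0 hlen e y x).trans (mul_le_mul_of_nonneg_left hyx hi0)

theorem measure_attractor [Finite V] [Nonempty E] (hX : S.IsGDAttractor X) (hp : S.IsWeights p)
    (hμ : S.IsGDMeasure p μ) (v : V) : μ v (X v) = 1 := by
  have := hμ.1
  obtain ⟨lo, hi, -, -, hi0, hi1, hlen⟩ := S.exists_len_bounds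
  refine le_antisymm prob_le_one (le_of_forall_lt fun c hc => ?_)
  obtain ⟨c', hcc', hc'⟩ := exists_between hc
  refine hcc'.trans_le ?_
  have hlarge : ∀ᶠ n : ℕ in atTop, ∀ w, c' ≤ μ w (Metric.cthickening (n : ℝ) (X w)) := by
    rw [eventually_all]
    intro w
    have hmono : Monotone fun n : ℕ => Metric.cthickening (n : ℝ) (X w) := fun m n hmn =>
      Metric.cthickening_mono (by exact_mod_cast hmn) _
    have hU : ⋃ n : ℕ, Metric.cthickening (n : ℝ) (X w) = univ := by
      refine eq_univ_of_forall fun x => mem_iUnion.2 ?_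
      obtain ⟨y, hy⟩ := (hX.1 w).1
      obtain ⟨n, hn⟩ := exists_nat_ge (dist x y)
      exact ⟨n, Metric.mem_cthickening_of_dist_le _ y _ _ hy hn⟩
    have ht := tendsto_measure_iUnion_atTop (μ := μ w) hmono
    rw [hU, measure_univ] at ht
    exact (ht.eventually (lt_mem_nhds hc')).mono fun n hn => hn.le
  obtain ⟨N, hN⟩ := hlarge.exists
  have hiter : ∀ n : ℕ, ∀ w, c' ≤ μ w (Metric.cthickening (hi ^ n * N) (X w)) := by
    intro n
    induction n with
    | zero => simpa using hN
    | succ n ih =>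
      intro w
      refine hμ.le_apply hp Metric.isClosed_cthickening.measurableSet fun e he => ?_
      refine (ih (S.term e)).trans (measure_mono fun y hy => ?_)
      subst he
      have := hX.map_mem_cthickening hi0.le (by positivity) (fun i e => (hlen i e).2) e hy
      rwa [← mul_assoc, ← pow_succ'] at this
  have ht : Tendsto (fun n : ℕ => hi ^ n * (N : ℝ)) atTop (nhds (0 * N)) :=
    (tendsto_pow_atTop_nhds_zero_of_lt_one hi0.le hi1).mul_const _
  rw [zero_mul] at ht
  have hlim := (tendsto_measure_cthickening_of_isClosed (μ := μ v) (s := X v)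
    ⟨1, one_pos, measure_ne_top _ _⟩ (hX.1 v).2.isClosed).comp ht
  exact ge_of_tendsto' hlim fun n => hiter n v

theorem measure_closedBall_pos [Finite V] [Nonempty E] (hX : S.IsGDAttractor X)
    (hp : S.IsWeights p) (hμ : S.IsGDMeasure p μ) {v : V} {x : ℝ × ℝ} (hx : x ∈ X v) {r : ℝ}
    (hr : 0 < r) : 0 < μ v (Metric.closedBall x r) := by
  obtain ⟨lo, hi, -, -, hi0, hi1, hlen⟩ := S.exists_len_bounds
  have hbdd : Bornology.IsBounded (⋃ v, X v) :=
    (isCompact_iUnion fun v => (hX.1 v).2).isBounded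
  obtain ⟨R, hR⟩ := Metric.isBounded_iff.1 hbdd
  have key : ∀ n : ℕ, ∀ v, ∀ x ∈ X v, 0 < μ v (Metric.closedBall x (hi ^ n * R)) := by
    intro n
    induction n with
    | zero =>
      intro v x hx
      refine lt_of_lt_of_le ?_ (measure_mono (s := X v) fun y hy => ?_)
      · rw [measure_attractor hX hp hμ v]; exact one_pos
      · simpa using hR (mem_iUnion.2 ⟨v, hy⟩) (mem_iUnion.2 ⟨v, hx⟩)
    | succ n ih =>
      intro v x hx
      obtain ⟨e, rfl, y, hy, rfl⟩ := hX.exists_preimage hx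
      rw [hμ.apply _ Metric.isClosed_closedBall.measurableSet]
      have hterm : 0 < ENNReal.ofReal (p e) *
          μ (S.term e) (S.map e ⁻¹' Metric.closedBall (S.map e y) (hi ^ (n + 1) * R)) := by
        refine ENNReal.mul_pos (by simpa using hp.1 e) (ne_of_gt ?_)
        refine (ih _ y hy).trans_le (measure_mono fun z hz => ?_)
        refine (dist_map_le hi0.le (fun i e => (hlen i e).2) e z y).trans ?_
        rw [pow_succ', mul_assoc]
        exact mul_le_mul_of_nonneg_left hz hi0.le
      refine hterm.trans_le ?_
      exact Finset.single_le_sum (f := fun e' => ENNReal.ofReal (p e') *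
        μ (S.term e') (S.map e' ⁻¹' Metric.closedBall (S.map e y) (hi ^ (n + 1) * R)))
        (fun _ _ => zero_le) (by simp)
  have ht : Tendsto (fun n : ℕ => hi ^ n * R) atTop (nhds (0 * R)) :=
    (tendsto_pow_atTop_nhds_zero_of_lt_one hi0.le hi1).mul_const _
  rw [zero_mul] at ht
  obtain ⟨n, hn⟩ := (ht.eventually (gt_mem_nhds hr)).exists
  exact (key n v x hx).trans_le (measure_mono (Metric.closedBall_subset_closedBall hn.le))

end BoxLikeGIFS

/-! ### Counting mesh intervals of positive measure -/

/-- The measure `ν` charges exactly the sets near `Y`, and `Y` is a nonempty part of `[0,1]`. -/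
structure IsCarrier (ν : Measure ℝ) (Y : Set ℝ) : Prop where
  nonempty : Y.Nonempty
  subset : Y ⊆ Icc 0 1
  meets : ∀ A, MeasurableSet A → ν A ≠ 0 → (Y ∩ A).Nonempty
  charges : ∀ y ∈ Y, ∀ r > 0, ν (Metric.closedBall y r) ≠ 0

theorem BoxLikeGIFS.isCarrier_map_coord {V E : Type*} [Fintype E] [Finite V] [Nonempty E]
    {S : BoxLikeGIFS V E} {X : V → Set (ℝ × ℝ)} {p : E → ℝ} {μ : V → Measure (ℝ × ℝ)}
    (hR : S.ROSC) (hX : S.IsGDAttractor X) (hp : S.IsWeights p) (hμ : S.IsGDMeasure p μ)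
    (v : V) (i : Bool) : IsCarrier ((μ v).map (coord i)) (coord i '' X v) where
  nonempty := (hX.1 v).1.image _
  subset := by
    rintro _ ⟨x, hx, rfl⟩
    exact mem_closure_unitSq_iff.1 (hX.subset_closure_unitSq hR v hx) i
  meets := by
    intro A hA h
    rw [Measure.map_apply (continuous_coord i).measurable hA] at h
    have := hμ.1 v
    by_contra hcon
    refine h (measure_mono_null (t := (X v)ᶜ) (fun x hx hxX => hcon ⟨_, ⟨x, hxX, rfl⟩, hx⟩) ?_)
    rw [prob_compl_eq_zero_iff (hX.1 v).2.measurableSet]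
    exact measure_attractor hX hp hμ v
  charges := by
    rintro _ ⟨x, hx, rfl⟩ r hr
    rw [Measure.map_apply (continuous_coord i).measurable Metric.isClosed_closedBall.measurableSet]
    refine (lt_of_lt_of_le (measure_closedBall_pos hX hp hμ hx hr)
      (measure_mono fun y hy => ?_)).ne'
    exact dist_le_iff_coord.1 hy i

/-- Indices of the mesh intervals of positive measure. -/
def chargedCubes (ν : Measure ℝ) (δ : ℝ) : Set ℤ := {k | ν (meshCube1 δ k) ≠ 0}

lemma exists_center_near {y δ : ℝ} (hy : y ∈ Icc (0 : ℝ) 1) (hδ : 0 < δ) (hδ1 : δ ≤ 1) :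
    ∃ z, (δ / 2 ≤ z ∧ z ≤ 1 - δ / 2) ∧ |y - z| ≤ δ / 2 := by
  refine ⟨max (δ / 2) (min y (1 - δ / 2)), ⟨le_max_left _ _, ?_⟩, ?_⟩
  · exact max_le (by linarith) (min_le_right _ _)
  · obtain ⟨h0, h1⟩ := hy
    rw [abs_le]
    rcases max_cases (δ / 2) (min y (1 - δ / 2)) with ⟨ha, hb⟩ | ⟨ha, hb⟩ <;>
      rcases min_cases y (1 - δ / 2) with ⟨hc, hd⟩ | ⟨hc, hd⟩ <;> rw [ha] <;>
      constructor <;> linarith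

namespace IsCarrier

variable {ν : Measure ℝ} {Y : Set ℝ} {δ : ℝ}

lemma exists_mem_cube (h : IsCarrier ν Y) {k : ℤ} (hk : k ∈ chargedCubes ν δ) :
    ∃ y ∈ Y, (k : ℝ) * δ ≤ y ∧ y ≤ ((k : ℝ) + 1) * δ := by
  obtain ⟨y, hy, h1, h2⟩ := h.meets _ measurableSet_Icc hk
  exact ⟨y, hy, h1, h2⟩

lemma chargedCubes_subset (h : IsCarrier ν Y) (hδ : 0 < δ) :
    chargedCubes ν δ ⊆ (Finset.Icc (-1) ⌊1 / δ⌋ : Finset ℤ) := by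
  intro k hk
  obtain ⟨y, hy, h1, h2⟩ := h.exists_mem_cube hk
  have hy' := h.subset hy
  rw [Finset.mem_coe, Finset.mem_Icc]
  constructor
  · have : (0 : ℝ) ≤ (k : ℝ) + 1 := by
      by_contra! hlt
      have := mul_neg_of_neg_of_pos hlt hδ
      linarith [hy'.1]
    have h3 : (0 : ℤ) ≤ k + 1 := by exact_mod_cast this
    omega
  · rw [Int.le_floor, le_div_iff₀ hδ]
    exact h1.trans hy'.2

lemma finite_chargedCubes (h : IsCarrier ν Y) (hδ : 0 < δ) : (chargedCubes ν δ).Finite :=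
  (Finset.finite_toSet _).subset (h.chargedCubes_subset hδ)

lemma Dq1_eq (h : IsCarrier ν Y) (hδ : 0 < δ) :
    Dq1 ν δ 0 = (h.finite_chargedCubes hδ).toFinset.card := by
  unfold Dq1
  rw [tsum_eq_sum (s := (h.finite_chargedCubes hδ).toFinset)]
  · rw [Finset.card_eq_sum_ones, Nat.cast_sum]
    refine Finset.sum_congr rfl fun k hk => ?_
    have hk : ν (meshCube1 δ k) ≠ 0 := by simpa [chargedCubes] using hk
    simp [hk]
  · intro k hk
    have hk : ν (meshCube1 δ k) = 0 := by simpa [chargedCubes] using hk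
    simp [hk]

lemma exists_charged_near (h : IsCarrier ν Y) (hδ : 0 < δ) {y : ℝ} (hy : y ∈ Y) :
    ∃ k ∈ chargedCubes ν δ, |y - k * δ| ≤ 2 * δ := by
  by_contra! hcon
  refine h.charges y hy (δ / 2) (by positivity) ?_
  have hsub : Metric.closedBall y (δ / 2) ⊆
      ⋃ k ∈ {k : ℤ | |y - k * δ| ≤ 2 * δ}, meshCube1 δ k := by
    intro z hz
    rw [Metric.mem_closedBall, Real.dist_eq, abs_le] at hz
    have h1 : (⌊z / δ⌋ : ℝ) * δ ≤ z := (le_div_iff₀ hδ).1 (Int.floor_le _)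
    have h2 : z ≤ ((⌊z / δ⌋ : ℝ) + 1) * δ := (div_le_iff₀ hδ).1 (Int.lt_floor_add_one _).le
    refine mem_iUnion₂.2 ⟨⌊z / δ⌋, ?_, h1, h2⟩
    rw [mem_ofPred_eq, abs_le]
    constructor <;> nlinarith
  refine measure_mono_null hsub ?_
  rw [measure_biUnion_null_iff (Set.to_countable _)]
  intro k hk
  by_contra hne
  exact absurd hk (not_le.2 (hcon k hne))

lemma one_le_Dq1 (h : IsCarrier ν Y) (hδ : 0 < δ) : 1 ≤ Dq1 ν δ 0 := by
  rw [h.Dq1_eq hδ]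
  obtain ⟨y, hy⟩ := h.nonempty
  obtain ⟨k, hk, -⟩ := h.exists_charged_near hδ hy
  have : 0 < (h.finite_chargedCubes hδ).toFinset.card :=
    Finset.card_pos.2 ⟨k, by simpa using hk⟩
  exact_mod_cast this

lemma Dq1_le (h : IsCarrier ν Y) (hδ : 0 < δ) : Dq1 ν δ 0 ≤ 1 / δ + 2 := by
  rw [h.Dq1_eq hδ]
  have h1 : (h.finite_chargedCubes hδ).toFinset ⊆ Finset.Icc (-1) ⌊1 / δ⌋ := by
    intro k hk
    exact h.chargedCubes_subset hδ (by simpa using hk)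
  have h2 := Finset.card_le_card h1
  rw [Int.card_Icc] at h2
  have h3 : (0 : ℤ) ≤ ⌊1 / δ⌋ := Int.floor_nonneg.2 (by positivity)
  have h4 : (((⌊1 / δ⌋ + 1 - -1).toNat : ℤ) : ℝ) = (⌊1 / δ⌋ : ℝ) + 2 := by
    rw [Int.toNat_of_nonneg (by omega)]; push_cast; ring
  have h5 : ((h.finite_chargedCubes hδ).toFinset.card : ℝ) ≤
      (((⌊1 / δ⌋ + 1 - -1).toNat : ℤ) : ℝ) := by exact_mod_cast h2
  linarith [Int.floor_le (1 / δ)]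

/-- Covering `Y` by intervals of length `2δ`. -/
lemma exists_cover (h : IsCarrier ν Y) (hδ : 0 < δ) :
    ∃ F : Finset ℝ, (F.card : ℝ) ≤ Dq1 ν (δ / 2) 0 ∧ ∀ y ∈ Y, ∃ z ∈ F, |y - z| ≤ δ := by
  have hδ2 : 0 < δ / 2 := by positivity
  refine ⟨(h.finite_chargedCubes hδ2).toFinset.image fun k : ℤ => (k : ℝ) * (δ / 2), ?_, ?_⟩
  · rw [h.Dq1_eq hδ2]
    exact_mod_cast Finset.card_image_le
  · intro y hy
    obtain ⟨k, hk, hd⟩ := h.exists_charged_near hδ2 hy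
    exact ⟨_, Finset.mem_image_of_mem _ (by simpa using hk), by linarith⟩

/-- Any cover of `Y` by intervals of length `2δ` bounds the number of charged intervals. -/
lemma Dq1_le_card_cover (h : IsCarrier ν Y) (hδ : 0 < δ) {F : Finset ℝ}
    (hF : ∀ y ∈ Y, ∃ z ∈ F, |y - z| ≤ δ) :
    Dq1 ν δ 0 ≤ 5 * F.card := by
  rw [h.Dq1_eq hδ]
  have hsub : (h.finite_chargedCubes hδ).toFinset ⊆
      F.biUnion fun z => Finset.Icc (⌊z / δ⌋ - 2) (⌊z / δ⌋ + 2) := by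
    intro k hk
    obtain ⟨y, hy, h1, h2⟩ := h.exists_mem_cube (by simpa using hk)
    obtain ⟨z, hz, hd⟩ := hF y hy
    exact Finset.mem_biUnion.2 ⟨z, hz, mem_Icc_floor_of_near hδ hd h1 h2⟩
  have h2 := (Finset.card_le_card hsub).trans
    (Finset.card_biUnion_le_card_mul _ _ 5 fun z _ => by
      rw [Int.card_Icc]
      ring_nf; decide)
  have h3 : ((h.finite_chargedCubes hδ).toFinset.card : ℝ) ≤ ((F.card * 5 : ℕ) : ℝ) := by
    exact_mod_cast h2
  push_cast at h3
  linarith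

/-- Packing intervals of length `δ` meeting `Y` in the unit interval. -/
lemma exists_packing (h : IsCarrier ν Y) (hδ : 0 < δ) (hδ1 : δ ≤ 1) :
    ∃ F : Finset ℝ, Dq1 ν δ 0 / 3 ≤ F.card ∧ (∀ z ∈ F, δ / 2 ≤ z ∧ z ≤ 1 - δ / 2) ∧
      (∀ z ∈ F, ∃ y ∈ Y, |y - z| ≤ δ / 2) ∧ ∀ z ∈ F, ∀ z' ∈ F, z ≠ z' → δ ≤ |z - z'| := by
  set K := (h.finite_chargedCubes hδ).toFinset with hK
  have hKmem : ∀ k ∈ K, k ∈ chargedCubes ν δ := fun k hk => by simpa [hK] using hk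
  set K' := K \ {-1, ⌊1 / δ⌋} with hK'
  have hcard : K.card ≤ K'.card + 2 := by
    have h1 : K.card - ({-1, ⌊1 / δ⌋} : Finset ℤ).card ≤ K'.card := Finset.le_card_sdiff _ _
    have h2 := Finset.card_le_two (a := (-1 : ℤ)) (b := ⌊1 / δ⌋)
    omega
  rw [h.Dq1_eq hδ]
  by_cases hsmall : K.card ≤ 3
  · obtain ⟨y, hy⟩ := h.nonempty
    obtain ⟨z, hz, hyz⟩ := exists_center_near (h.subset hy) hδ hδ1
    refine ⟨{z}, ?_, ?_, ?_, ?_⟩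
    · rw [Finset.card_singleton, div_le_iff₀ (by norm_num)]
      exact_mod_cast hsmall
    · simpa using hz
    · intro z' hz'
      rw [Finset.mem_singleton.1 hz']
      exact ⟨y, hy, hyz⟩
    · intro z₁ hz₁ z₂ hz₂ hne
      exact absurd ((Finset.mem_singleton.1 hz₁).trans (Finset.mem_singleton.1 hz₂).symm) hne
  · have hinj : Function.Injective fun k : ℤ => ((k : ℝ) + 1 / 2) * δ := by
      intro k l hkl
      have := mul_right_cancel₀ hδ.ne' hkl
      exact_mod_cast add_right_cancel this
    refine ⟨K'.image fun k : ℤ => ((k : ℝ) + 1 / 2) * δ, ?_, ?_, ?_, ?_⟩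
    · rw [Finset.card_image_of_injective _ hinj, div_le_iff₀ (by norm_num)]
      have : K.card ≤ K'.card * 3 := by omega
      exact_mod_cast this
    · intro z hz
      obtain ⟨k, hk, rfl⟩ := Finset.mem_image.1 hz
      rw [hK', Finset.mem_sdiff, Finset.mem_insert, Finset.mem_singleton, not_or] at hk
      have h1 := h.chargedCubes_subset hδ (hKmem k hk.1)
      rw [Finset.mem_coe, Finset.mem_Icc] at h1
      have h2 : (0 : ℤ) ≤ k := by have := hk.2.1; omega
      have h3 : k + 1 ≤ ⌊1 / δ⌋ := by have := hk.2.2; omega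
      have h4 : (0 : ℝ) ≤ k := by exact_mod_cast h2
      rw [Int.le_floor, le_div_iff₀ hδ] at h3
      push_cast at h3
      constructor <;> nlinarith
    · intro z hz
      obtain ⟨k, hk, rfl⟩ := Finset.mem_image.1 hz
      obtain ⟨y, hy, h1, h2⟩ := h.exists_mem_cube (hKmem k (Finset.mem_sdiff.1 hk).1)
      refine ⟨y, hy, ?_⟩
      rw [abs_le]
      constructor <;> linarith
    · intro z hz z' hz' hne
      obtain ⟨k, hk, rfl⟩ := Finset.mem_image.1 hz
      obtain ⟨l, hl, rfl⟩ := Finset.mem_image.1 hz'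
      have hkl : k ≠ l := fun hkl => hne (by rw [hkl])
      have h1 : (1 : ℤ) ≤ |k - l| := Int.one_le_abs (sub_ne_zero.2 hkl)
      have h2 : (1 : ℝ) ≤ |(k : ℝ) - l| := by exact_mod_cast h1
      rw [← sub_mul, add_sub_add_right_eq_sub, abs_mul, abs_of_pos hδ]
      nlinarith

end IsCarrier

lemma exists_rpow_le_on_Icc {a : ℝ} (ha : 0 < a) (R s : ℝ) :
    ∃ M : ℝ, 1 ≤ M ∧ ∀ r ∈ Icc a R, r ^ s ≤ M := by
  have hcont : ContinuousOn (fun r : ℝ => r ^ s) (Icc a R) := fun r hr =>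
    (Real.continuousAt_rpow_const _ _ (Or.inl (ha.trans_le hr.1).ne')).continuousWithinAt
  obtain ⟨M, hM⟩ := (isCompact_Icc.image_of_continuousOn hcont).bddAbove
  exact ⟨max 1 M, le_max_left _ _, fun r hr => (hM ⟨r, hr, rfl⟩).trans (le_max_right _ _)⟩

lemma HasLq1.exists_bounds {ν : Measure ℝ} {Y : Set ℝ} {τ : ℝ} (h : HasLq1 ν 0 τ)
    (hν : IsCarrier ν Y) {ε : ℝ} (hε : 0 < ε) (R : ℝ) :
    ∃ C : ℝ, 1 ≤ C ∧ ∀ r, 0 < r → r ≤ R →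
      r ^ (-τ + ε) ≤ C * Dq1 ν r 0 ∧ Dq1 ν r 0 ≤ C * r ^ (-τ - ε) := by
  have hev := (Metric.tendsto_nhds.1 h ε hε).and
    (Ioo_mem_nhdsGT (zero_lt_one (α := ℝ)))
  obtain ⟨r0, hr0, hr0'⟩ := mem_nhdsGT_iff_exists_Ioo_subset.1 hev
  have hr0 : 0 < r0 := hr0
  obtain ⟨M, hM1, hM⟩ := exists_rpow_le_on_Icc hr0 R (-τ + ε)
  obtain ⟨M', hM1', hM'⟩ := exists_rpow_le_on_Icc hr0 R (τ + ε)
  have hA : 2 ≤ 1 / r0 + 2 := by have := one_div_pos.2 hr0; linarith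
  refine ⟨M * (M' * (1 / r0 + 2)), ?_, fun r hr hrR => ?_⟩
  · nlinarith [mul_le_mul hM1' hA zero_le_two (by linarith)]
  have hMM : 1 ≤ M' * (1 / r0 + 2) := by nlinarith
  have hD := hν.one_le_Dq1 hr
  have hD0 : 0 < Dq1 ν r 0 := by linarith
  rcases lt_or_ge r r0 with hlt | hge
  · have h1 : dist (Real.log (Dq1 ν r 0) / (-Real.log r)) τ < ε ∧ r ∈ Ioo (0 : ℝ) 1 :=
      hr0' ⟨hr, hlt⟩
    obtain ⟨h1, h2⟩ := h1
    have hlog : 0 < -Real.log r := neg_pos.2 (Real.log_neg hr h2.2)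
    rw [Real.dist_eq, abs_lt, lt_sub_iff_add_lt, sub_lt_iff_lt_add, lt_div_iff₀ hlog,
      div_lt_iff₀ hlog] at h1
    have hC : 1 ≤ M * (M' * (1 / r0 + 2)) := one_le_mul_of_one_le_of_one_le hM1 hMM
    constructor
    · refine le_trans ?_ (le_mul_of_one_le_left hD0.le hC)
      rw [Real.rpow_def_of_pos hr, ← Real.le_log_iff_exp_le hD0]
      linarith
    · refine le_trans ?_ (le_mul_of_one_le_left (by positivity) hC)
      rw [Real.rpow_def_of_pos hr, ← Real.log_le_iff_le_exp hD0]
      linarith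
  · have hx := hM r ⟨hge, hrR⟩
    have hy := hM' r ⟨hge, hrR⟩
    constructor
    · have : (1 : ℝ) ≤ M' * (1 / r0 + 2) * Dq1 ν r 0 := one_le_mul_of_one_le_of_one_le hMM hD
      rw [mul_assoc]
      exact hx.trans (le_mul_of_one_le_right (by linarith) this)
    · have h1 : Dq1 ν r 0 ≤ 1 / r0 + 2 :=
        (hν.Dq1_le hr).trans (by gcongr)
      have h2 : 1 ≤ M' * r ^ (-τ - ε) := by
        rw [show -τ - ε = -(τ + ε) by ring, Real.rpow_neg hr.le, ← div_eq_mul_inv,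
          one_le_div (by positivity)]
        exact hy
      calc Dq1 ν r 0 ≤ 1 / r0 + 2 := h1
        _ ≤ (1 / r0 + 2) * (M' * r ^ (-τ - ε)) := le_mul_of_one_le_right (by linarith) h2
        _ ≤ M * ((1 / r0 + 2) * (M' * r ^ (-τ - ε))) :=
            le_mul_of_one_le_left (by positivity) hM1
        _ = _ := by ring

/-- Comparison of exponents of two power laws at small scales. -/
lemma exponent_le_of_forall_rpow_le {A B s s' η : ℝ} (hA : 0 < A) (hη : 0 < η)
    (h : ∀ δ : ℝ, 0 < δ → δ < η → A * δ ^ (-s) ≤ B * δ ^ (-s')) : s ≤ s' := by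
  by_contra! hlt
  have hlim : Tendsto (fun δ : ℝ => B * δ ^ (s - s')) (nhdsWithin 0 (Ioi 0)) (nhds 0) := by
    have h1 : Tendsto (fun δ : ℝ => δ ^ (s - s')) (nhds 0) (nhds 0) := by
      have := Real.continuousAt_rpow_const 0 (s - s') (Or.inr (by linarith))
      simpa [ContinuousAt, Real.zero_rpow (sub_pos.2 hlt).ne'] using this
    simpa using (h1.const_mul B).mono_left nhdsWithin_le_nhds
  have hle : A ≤ 0 := by
    refine ge_of_tendsto hlim ?_
    filter_upwards [Ioo_mem_nhdsGT hη] with δ hδ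
    have := h δ hδ.1 hδ.2
    rw [sub_eq_add_neg, Real.rpow_add hδ.1, mul_comm (δ ^ s), ← mul_assoc]
    rw [Real.rpow_neg hδ.1.le, ← div_eq_mul_inv, div_le_iff₀ (Real.rpow_pos_of_pos hδ.1 s)] at this
    exact this
  linarith

/-- Power-law control, up to `ε`, of coverings and packings of sets `Y i` indexed by a
finite type, with exponents `τ i`. -/
structure HasExponents {ι : Type*} (Y : ι → Set ℝ) (τ : ι → ℝ) : Prop where
  cover : ∀ ε > 0, ∀ R : ℝ, ∃ C : ℝ, 1 ≤ C ∧ ∀ i r, 0 < r → r ≤ R →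
    ∃ F : Finset ℝ, (F.card : ℝ) ≤ C * r ^ (-τ i - ε) ∧ ∀ y ∈ Y i, ∃ z ∈ F, |y - z| ≤ r
  packing : ∀ ε > 0, ∃ C : ℝ, 1 ≤ C ∧ ∀ i r, 0 < r → r ≤ 1 →
    ∃ F : Finset ℝ, r ^ (-τ i + ε) ≤ C * F.card ∧ (∀ z ∈ F, r / 2 ≤ z ∧ z ≤ 1 - r / 2) ∧
      (∀ z ∈ F, ∃ y ∈ Y i, |y - z| ≤ r / 2) ∧ ∀ z ∈ F, ∀ z' ∈ F, z ≠ z' → r ≤ |z - z'|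
  le_cover : ∀ ε > 0, ∃ C : ℝ, 1 ≤ C ∧ ∀ i r, 0 < r → r ≤ 1 →
    ∀ F : Finset ℝ, (∀ y ∈ Y i, ∃ z ∈ F, |y - z| ≤ r) → r ^ (-τ i + ε) ≤ C * F.card

lemma hasExponents_of_hasLq1 {ι : Type*} [Finite ι] {ν : ι → Measure ℝ} {Y : ι → Set ℝ}
    {τ : ι → ℝ} (hν : ∀ i, IsCarrier (ν i) (Y i)) (h : ∀ i, HasLq1 (ν i) 0 (τ i)) :
    HasExponents Y τ := by
  have key : ∀ ε > 0, ∀ R : ℝ, ∃ C : ℝ, 1 ≤ C ∧ ∀ i r, 0 < r → r ≤ R →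
      r ^ (-τ i + ε) ≤ C * Dq1 (ν i) r 0 ∧ Dq1 (ν i) r 0 ≤ C * r ^ (-τ i - ε) := by
    intro ε hε R
    choose C hC1 hC using fun i => (h i).exists_bounds (hν i) hε R
    obtain ⟨M, hM⟩ := Finite.exists_le C
    refine ⟨max 1 M, le_max_left _ _, fun i r hr hrR => ⟨?_, ?_⟩⟩
    · refine (hC i r hr hrR).1.trans ?_
      have := (hν i).one_le_Dq1 hr
      gcongr
      exact (hM i).trans (le_max_right _ _)
    · refine (hC i r hr hrR).2.trans ?_
      gcongr
      exact (hM i).trans (le_max_right _ _)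
  refine ⟨fun ε hε R => ?_, fun ε hε => ?_, fun ε hε => ?_⟩
  · obtain ⟨C, hC1, hC⟩ := key ε hε (R / 2)
    obtain ⟨M, hM⟩ := Finite.exists_le fun i => (2 : ℝ)⁻¹ ^ (-τ i - ε)
    refine ⟨C * max 1 M, one_le_mul_of_one_le_of_one_le hC1 (le_max_left _ _),
      fun i r hr hrR => ?_⟩
    obtain ⟨F, hF, hF'⟩ := (hν i).exists_cover hr
    refine ⟨F, hF.trans ((hC i (r / 2) (by positivity) (by linarith)).2.trans ?_), hF'⟩
    rw [div_eq_inv_mul, Real.mul_rpow (by norm_num) hr.le, mul_assoc]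
    gcongr
    exact (hM i).trans (le_max_right _ _)
  · obtain ⟨C, hC1, hC⟩ := key ε hε 1
    refine ⟨3 * C, by linarith, fun i r hr hr1 => ?_⟩
    obtain ⟨F, hF, hF'⟩ := (hν i).exists_packing hr hr1
    refine ⟨F, (hC i r hr hr1).1.trans ?_, hF'⟩
    rw [div_le_iff₀ (by norm_num)] at hF
    nlinarith
  · obtain ⟨C, hC1, hC⟩ := key ε hε 1
    refine ⟨C * 5, by linarith, fun i r hr hr1 F hF => ?_⟩
    refine (hC i r hr hr1).1.trans ?_
    rw [mul_assoc]
    gcongr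
    exact (hν i).Dq1_le_card_cover hr hF

namespace BoxLikeGIFS

variable {V E : Type*} {S : BoxLikeGIFS V E} {X : V → Set (ℝ × ℝ)} {τ : V × Bool → ℝ}

lemma exponent_term_le (hX : S.IsGDAttractor X)
    (hτ : HasExponents (fun j : V × Bool => coord j.2 '' X j.1) τ) (e : E) (i : Bool) :
    τ (S.term e, S.turn e i) ≤ τ (S.init e, i) := by
  refine le_of_forall_pos_le_add fun ε hε => ?_
  obtain ⟨C, hC1, hC⟩ := hτ.cover (ε / 2) (half_pos hε) 1
  obtain ⟨C', hC1', hC'⟩ := hτ.le_cover (ε / 2) (half_pos hε)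
  have hl := S.len_pos i e
  have key : τ (S.term e, S.turn e i) - ε / 2 ≤ τ (S.init e, i) + ε / 2 := by
    refine exponent_le_of_forall_rpow_le
      (A := ((S.len i e)⁻¹) ^ (-τ (S.term e, S.turn e i) + ε / 2)) (B := C' * C) (by positivity) hl
      fun δ hδ hδl => ?_
    obtain ⟨F, hF, hF'⟩ := hC (S.init e, i) δ hδ (hδl.le.trans (S.len_lt_one i e).le)
    have h1 := hC' (S.term e, S.turn e i) (δ / S.len i e) (by positivity)
      ((div_le_one hl).2 hδl.le)
      (F.image fun z => S.sgn i e * (z - coord i (S.trans e)) / S.len i e) ?_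
    · rw [div_eq_inv_mul, Real.mul_rpow (by positivity) hδ.le] at h1
      rw [show -(τ (S.term e, S.turn e i) - ε / 2) = -τ (S.term e, S.turn e i) + ε / 2 by ring]
      refine h1.trans ?_
      rw [mul_assoc]
      gcongr
      refine (Nat.cast_le.2 Finset.card_image_le).trans (hF.trans_eq ?_)
      rw [show -τ (S.init e, i) - ε / 2 = -(τ (S.init e, i) + ε / 2) by ring]
    · rintro _ ⟨y, hy, rfl⟩
      obtain ⟨z, hz, hyz⟩ := hF' (coord i (S.map e y)) ⟨_, hX.map_mem e hy, rfl⟩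
      refine ⟨_, Finset.mem_image_of_mem _ hz, ?_⟩
      have hsq : S.sgn i e * S.sgn i e = 1 := by rw [← abs_mul_abs_self, abs_sgn, one_mul]
      have : coord (S.turn e i) y - S.sgn i e * (z - coord i (S.trans e)) / S.len i e =
          S.sgn i e * (coord i (S.map e y) - z) / S.len i e := by
        rw [coord_map]
        field_simp
        linear_combination (-(S.len i e * coord (S.turn e i) y)) * hsq
      rw [this, abs_div, abs_mul, abs_sgn, one_mul, abs_of_pos hl]
      gcongr
  linarith

lemma exponent_term_eq (hX : S.IsGDAttractor X)
    (hτ : HasExponents (fun j : V × Bool => coord j.2 '' X j.1) τ) {t : ℝ}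
    (ht : ∀ v i, τ (v, i) + τ (v, !i) = t) (e : E) (i : Bool) :
    τ (S.term e, S.turn e i) = τ (S.init e, i) := by
  have h1 := exponent_term_le hX hτ e i
  have h2 := exponent_term_le hX hτ e (!i)
  rw [turn_not] at h2
  linarith [ht (S.term e) (S.turn e i), ht (S.init e) i]

end BoxLikeGIFS

/-- A planar cover from a cover of one coordinate when the other side is long. -/
lemma exists_cover_of_one_le (i : Bool) {Z : Set (ℝ × ℝ)} (hZ : Z ⊆ closure BoxLikeGIFS.unitSq)
    {δ : Bool → ℝ} (hδ : 1 ≤ δ (!i)) {F : Finset ℝ}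
    (hF : ∀ y ∈ coord i '' Z, ∃ z ∈ F, |y - z| ≤ δ i) :
    ∃ F' : Finset (ℝ × ℝ), IsCover Z δ F' ∧ F'.card ≤ F.card := by
  refine ⟨F.image fun z => mkPt i z 0, fun x hx => ?_, Finset.card_image_le⟩
  obtain ⟨z, hz, hxz⟩ := hF _ ⟨x, hx, rfl⟩
  refine ⟨_, Finset.mem_image_of_mem _ hz, (forall_bool_iff i).2 ⟨by simpa using hxz, ?_⟩⟩
  have := BoxLikeGIFS.mem_closure_unitSq_iff.1 (hZ hx) (!i)
  rw [coord_mkPt_not, sub_zero, abs_of_nonneg this.1]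
  exact this.2.trans hδ

/-- A planar cover from covers of the two coordinates. -/
lemma exists_cover_product {Z : Set (ℝ × ℝ)} {δ : Bool → ℝ} {F : Bool → Finset ℝ}
    (hF : ∀ i, ∀ y ∈ coord i '' Z, ∃ z ∈ F i, |y - z| ≤ δ i) :
    ∃ F' : Finset (ℝ × ℝ), IsCover Z δ F' ∧ F'.card = (F false).card * (F true).card := by
  refine ⟨F false ×ˢ F true, fun x hx => ?_, Finset.card_product _ _⟩
  obtain ⟨z, hz, hxz⟩ := hF false _ ⟨x, hx, rfl⟩
  obtain ⟨w, hw, hxw⟩ := hF true _ ⟨x, hx, rfl⟩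
  exact ⟨(z, w), Finset.mk_mem_product hz hw, Bool.forall_bool.2 ⟨hxz, hxw⟩⟩

/-- A planar packing from a packing of one coordinate. -/
lemma exists_packing_of_coord (i : Bool) {Z : Set (ℝ × ℝ)}
    (hZ : Z ⊆ closure BoxLikeGIFS.unitSq) {δ : Bool → ℝ} (hδ0 : 0 < δ (!i)) (hδ1 : δ (!i) ≤ 1)
    {F : Finset ℝ} (hF : ∀ z ∈ F, δ i / 2 ≤ z ∧ z ≤ 1 - δ i / 2)
    (hmeet : ∀ z ∈ F, ∃ y ∈ coord i '' Z, |y - z| ≤ δ i / 2)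
    (hsep : ∀ z ∈ F, ∀ z' ∈ F, z ≠ z' → δ i ≤ |z - z'|) :
    ∃ F' : Finset (ℝ × ℝ), IsPacking Z δ F' ∧ F'.card = F.card := by
  have key : ∀ z, ∃ w, z ∈ F → (δ (!i) / 2 ≤ w ∧ w ≤ 1 - δ (!i) / 2) ∧
      ∃ x ∈ Z, |coord i x - z| ≤ δ i / 2 ∧ |coord (!i) x - w| ≤ δ (!i) / 2 := by
    intro z
    by_cases hz : z ∈ F
    · obtain ⟨_, ⟨x, hx, rfl⟩, hxz⟩ := hmeet z hz
      obtain ⟨w, hw, hxw⟩ :=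
        exists_center_near (BoxLikeGIFS.mem_closure_unitSq_iff.1 (hZ hx) (!i)) hδ0 hδ1
      exact ⟨w, fun _ => ⟨hw, x, hx, hxz, hxw⟩⟩
    · exact ⟨0, fun h => absurd h hz⟩
  choose w hw using key
  refine ⟨F.image fun z => mkPt i z (w z), ⟨?_, ?_, ?_⟩, Finset.card_image_of_injective _ ?_⟩
  · intro _ h
    obtain ⟨z, hz, rfl⟩ := Finset.mem_image.1 h
    refine (forall_bool_iff i).2 ⟨by simpa using hF z hz, by simpa using (hw z hz).1⟩
  · intro _ h
    obtain ⟨z, hz, rfl⟩ := Finset.mem_image.1 h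
    obtain ⟨-, x, hx, h1, h2⟩ := hw z hz
    exact ⟨x, hx, (forall_bool_iff i).2 ⟨by simpa using h1, by simpa using h2⟩⟩
  · intro _ h _ h' hne
    obtain ⟨z, hz, rfl⟩ := Finset.mem_image.1 h
    obtain ⟨z', hz', rfl⟩ := Finset.mem_image.1 h'
    refine ⟨i, ?_⟩
    simpa using hsep z hz z' hz' fun heq => hne (by rw [heq])
  · intro z z' h
    simpa using congrArg (coord i) h

/-- The exponents of the two coordinate projections as a single function. -/
def pairExponent {V : Type*} (τx τy : V → ℝ) (j : V × Bool) : ℝ := if j.2 then τy j.1 else τx j.1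

namespace BoxLikeGIFS

variable {V E : Type*} (S : BoxLikeGIFS V E)

/-- The nonzero entry of the row of index `i` of the block of `e` in `Gmat` at `q = x = 0`. -/
noncomputable def weight (τ : V × Bool → ℝ) (s : ℝ) (i : Bool) (e : E) : ℝ :=
  S.len i e ^ τ (S.term e, S.turn e i) * S.len (!i) e ^ (s - τ (S.term e, S.turn e i))

lemma weight_pos (τ : V × Bool → ℝ) (s : ℝ) (i : Bool) (e : E) : 0 < S.weight τ s i e :=
  mul_pos (Real.rpow_pos_of_pos (S.len_pos _ _) _) (Real.rpow_pos_of_pos (S.len_pos _ _) _)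

lemma weight_le {τ : V × Bool → ℝ} {s γ hi : ℝ} (hs : γ ≤ s) (hhi : ∀ i e, S.len i e ≤ hi)
    (i : Bool) (e : E) : S.weight τ s i e ≤ hi ^ (s - γ) * S.weight τ γ i e := by
  have h := Real.rpow_le_rpow (S.len_pos (!i) e).le (hhi (!i) e) (sub_nonneg.2 hs)
  have hw := S.weight_pos τ γ i e
  calc S.weight τ s i e = S.len (!i) e ^ (s - γ) * S.weight τ γ i e := by
        unfold weight
        rw [mul_left_comm, ← Real.rpow_add (S.len_pos _ _)]
        congr 2
        ring
    _ ≤ _ := by gcongr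

lemma Gmat_apply (p : E → ℝ) (τx τy : V → ℝ) (s : ℝ) (e e' : E) (i i' : Bool) :
    S.Gmat p τx τy 0 0 s (e, i) (e', i') =
      if S.init e' = S.term e ∧ i' = S.turn e' i then
        S.weight (pairExponent τx τy) s i e' else 0 := by
  unfold Gmat weight pairExponent turn len
  by_cases h : S.init e' = S.term e
  · by_cases hd : S.diag e' = true <;> cases i <;> cases i' <;> simp [h, hd]
  · simp [h, Ne.symm h]

lemma Gmat_nonneg (p : E → ℝ) (τx τy : V → ℝ) (s : ℝ) (j j' : E × Bool) :
    0 ≤ S.Gmat p τx τy 0 0 s j j' := by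
  obtain ⟨e, i⟩ := j
  obtain ⟨e', i'⟩ := j'
  rw [Gmat_apply]
  split_ifs
  · exact (S.weight_pos _ _ _ _).le
  · exact le_rfl

variable [Fintype E]

lemma Gmat_mulVec (p : E → ℝ) (τx τy : V → ℝ) (s : ℝ) (u : E × Bool → ℝ) (e : E) (i : Bool) :
    (S.Gmat p τx τy 0 0 s).mulVec u (e, i) = ∑ e' with S.init e' = S.term e,
      S.weight (pairExponent τx τy) s i e' * u (e', S.turn e' i) := by
  rw [Matrix.mulVec, dotProduct, Fintype.sum_prod_type, Finset.sum_filter]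
  refine Finset.sum_congr rfl fun e' _ => ?_
  simp only [Gmat_apply]
  by_cases h : S.init e' = S.term e
  · simp [h]
  · simp [h]

lemma exists_subharmonic {p : E → ℝ} {τx τy : V → ℝ} {γ : ℝ}
    (hγ : specRad (S.Gmat p τx τy 0 0 γ) = 1) :
    ∃ H : V → Bool → ℝ, (∀ v i, 0 ≤ H v i) ∧ (∃ v i, 0 < H v i) ∧
      ∀ v i, H v i ≤ ∑ e with S.init e = v,
        S.weight (pairExponent τx τy) γ i e * H (S.term e) (S.turn e i) := by
  obtain ⟨h, h0, ⟨⟨e₀, i₀⟩, hpos⟩, hsub⟩ := exists_subsolution (S.Gmat_nonneg p τx τy γ) hγ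
  refine ⟨fun v i => ∑ e with S.init e = v,
    S.weight (pairExponent τx τy) γ i e * h (e, S.turn e i), fun v i => ?_,
    ⟨S.term e₀, i₀, ?_⟩, fun v i => ?_⟩
  · exact Finset.sum_nonneg fun e _ => mul_nonneg (S.weight_pos _ _ _ _).le (h0 _)
  · exact hpos.trans_le ((hsub _).trans_eq (S.Gmat_mulVec _ _ _ _ _ _ _))
  · refine Finset.sum_le_sum fun e _ => mul_le_mul_of_nonneg_left ?_ (S.weight_pos _ _ _ _).le
    exact (hsub _).trans_eq (S.Gmat_mulVec _ _ _ _ _ _ _)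

lemma exists_superharmonic [Nonempty E] {p : E → ℝ} {τx τy : V → ℝ} {γ s : ℝ}
    (hγ : specRad (S.Gmat p τx τy 0 0 γ) = 1) (hs : γ < s) :
    ∃ U : V → Bool → ℝ, (∀ v i, 0 < U v i) ∧
      ∀ v i, ∑ e with S.init e = v,
        S.weight (pairExponent τx τy) s i e * U (S.term e) (S.turn e i) ≤ U v i := by
  obtain ⟨lo, hi, -, -, hi0, hi1, hlen⟩ := S.exists_len_bounds
  obtain ⟨u, hu1, hu⟩ := exists_supersolution (S.Gmat_nonneg p τx τy γ) hγ
    (Real.rpow_pos_of_pos hi0 (s - γ)) (Real.rpow_lt_one hi0.le hi1 (sub_pos.2 hs))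
  have hupos : ∀ j, 0 < u j := fun j => zero_lt_one.trans_le (hu1 j)
  have hU0 : ∀ v i, 0 < ∑ e with S.init e = v,
      S.weight (pairExponent τx τy) γ i e * u (e, S.turn e i) := fun v i => by
    obtain ⟨e, he⟩ := S.edge_exists v
    exact Finset.sum_pos (fun e _ => mul_pos (S.weight_pos _ _ _ _) (hupos _))
      ⟨e, by simpa using he⟩
  refine ⟨fun v i => ∑ e with S.init e = v,
    S.weight (pairExponent τx τy) γ i e * u (e, S.turn e i), hU0, fun v i => ?_⟩
  refine Finset.sum_le_sum fun e _ => ?_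
  have h1 := hu (e, S.turn e i)
  rw [Gmat_mulVec] at h1
  calc _ ≤ hi ^ (s - γ) * S.weight (pairExponent τx τy) γ i e *
        ∑ e' with S.init e' = S.term e, S.weight (pairExponent τx τy) γ (S.turn e i) e' *
          u (e', S.turn e' (S.turn e i)) :=
        mul_le_mul_of_nonneg_right (S.weight_le hs.le (fun i e => (hlen i e).2) i e) (hU0 _ _).le
    _ ≤ _ := by
        rw [mul_comm (hi ^ (s - γ)), mul_assoc]
        exact mul_le_mul_of_nonneg_left h1 (S.weight_pos _ _ _ _).le

end BoxLikeGIFS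

namespace BoxLikeGIFS

section Monomial

variable {V E : Type*} {S : BoxLikeGIFS V E}

/-- The monomial in the side lengths of a box which `weight` governs. -/
noncomputable def sideMonomial (τ : V × Bool → ℝ) (s : ℝ) (v : V) (b : Bool) (δ : Bool → ℝ) : ℝ :=
  δ b ^ (-τ (v, b)) * δ (!b) ^ (-(s - τ (v, b)))

lemma sideMonomial_pos (τ : V × Bool → ℝ) (s : ℝ) (v : V) (b : Bool) {δ : Bool → ℝ}
    (hδ : ∀ i, 0 < δ i) : 0 < sideMonomial τ s v b δ :=
  mul_pos (Real.rpow_pos_of_pos (hδ _) _) (Real.rpow_pos_of_pos (hδ _) _)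

lemma sideMonomial_const (τ : V × Bool → ℝ) (s : ℝ) (v : V) (b : Bool) {d : ℝ} (hd : 0 < d) :
    sideMonomial τ s v b (fun _ => d) = d ^ (-s) := by
  rw [sideMonomial, ← Real.rpow_add hd]
  congr 1
  ring

lemma sideMonomial_rescale {τ : V × Bool → ℝ} {e : E}
    (hτ : ∀ i, τ (S.term e, S.turn e i) = τ (S.init e, i)) (s : ℝ) (b : Bool) {δ : Bool → ℝ}
    (hδ : ∀ i, 0 < δ i) :
    sideMonomial τ s (S.term e) (S.turn e b) (S.rescale e δ) =
      S.weight τ s b e * sideMonomial τ s (S.init e) b δ := by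
  have hdiv : ∀ i (x : ℝ), (δ i / S.len i e) ^ (-x) = S.len i e ^ x * δ i ^ (-x) := fun i x => by
    rw [Real.div_rpow (hδ i).le (S.len_pos i e).le, Real.rpow_neg (S.len_pos i e).le,
      div_inv_eq_mul, mul_comm]
  unfold sideMonomial weight
  rw [← turn_not, rescale_turn, rescale_turn, hτ, hdiv, hdiv]
  ring

lemma exists_sideMonomial_le [Finite V] (τ : V × Bool → ℝ) (s : ℝ) {lo : ℝ} (hlo : 0 < lo) :
    ∃ M : ℝ, 1 ≤ M ∧ ∀ v b (δ : Bool → ℝ) (i : Bool), (∀ i, 0 < δ i ∧ δ i ≤ 1) → lo ≤ δ (!i) →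
      sideMonomial τ s v b δ ≤
        M * δ i ^ (-(if i = b then τ (v, b) else s - τ (v, b))) := by
  choose M hM1 hM using fun j : V × Bool => exists_rpow_le_on_Icc hlo 1 (-(s - τ j))
  choose M' hM1' hM' using fun j : V × Bool => exists_rpow_le_on_Icc hlo 1 (-τ j)
  obtain ⟨K, hK⟩ := Finite.exists_le M
  obtain ⟨K', hK'⟩ := Finite.exists_le M'
  refine ⟨max 1 (max K K'), le_max_left _ _, fun v b δ i hδ hi => ?_⟩
  have hpos := fun x => Real.rpow_pos_of_pos (hδ i).1 x
  by_cases h : i = b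
  · subst h
    rw [if_pos rfl, sideMonomial, mul_comm]
    refine mul_le_mul_of_nonneg_right ?_ (hpos _).le
    exact (hM (v, i) _ ⟨hi, (hδ _).2⟩).trans ((hK _).trans
      ((le_max_left _ _).trans (le_max_right _ _)))
  · obtain rfl : b = !i := by cases i <;> cases b <;> simp_all
    rw [if_neg h, sideMonomial, Bool.not_not]
    refine mul_le_mul_of_nonneg_right ?_ (hpos _).le
    exact (hM' (v, !i) _ ⟨hi, (hδ _).2⟩).trans ((hK' _).trans
      ((le_max_right _ _).trans (le_max_right _ _)))

lemma exists_le_sideMonomial (τ : V × Bool → ℝ) (s : ℝ) (v : V) (b : Bool) (R : ℝ) :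
    ∃ c : ℝ, 0 < c ∧ ∀ d, 0 < d → ∀ δ : Bool → ℝ, (∀ i, d ≤ δ i ∧ δ i ≤ R * d) →
      c * d ^ (-s) ≤ sideMonomial τ s v b δ := by
  have key : ∀ x : ℝ, ∃ c : ℝ, 0 < c ∧ ∀ d, 0 < d → ∀ r, d ≤ r → r ≤ R * d →
      c * d ^ (-x) ≤ r ^ (-x) := by
    intro x
    obtain ⟨M, hM1, hM⟩ := exists_rpow_le_on_Icc zero_lt_one R x
    refine ⟨M⁻¹, by positivity, fun d hd r hr hrR => ?_⟩
    have hr0 : 0 < r := hd.trans_le hr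
    have h := hM (r / d) ⟨(one_le_div hd).2 hr, (div_le_iff₀ hd).2 hrR⟩
    rw [Real.div_rpow hr0.le hd.le, div_le_iff₀ (by positivity)] at h
    rw [Real.rpow_neg hd.le, Real.rpow_neg hr0.le, ← mul_inv]
    exact inv_anti₀ (by positivity) h
  obtain ⟨c, hc, hc'⟩ := key (τ (v, b))
  obtain ⟨k, hk, hk'⟩ := key (s - τ (v, b))
  refine ⟨c * k, by positivity, fun d hd δ hδ => ?_⟩
  have h1 := hc' d hd _ (hδ b).1 (hδ b).2
  have h2 := hk' d hd _ (hδ !b).1 (hδ !b).2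
  have h3 : 0 < δ b := hd.trans_le (hδ b).1
  calc c * k * d ^ (-s) = c * d ^ (-τ (v, b)) * (k * d ^ (-(s - τ (v, b)))) := by
        rw [mul_mul_mul_comm, ← Real.rpow_add hd]
        congr 2
        ring
    _ ≤ _ := mul_le_mul h1 h2 (by positivity) (by positivity)

end Monomial

section Recursion

variable {V E : Type*} {S : BoxLikeGIFS V E} [Fintype E] {X : V → Set (ℝ × ℝ)} {lo hi δ₀ : ℝ}

lemma IsGDAttractor.exists_cover_le_of_superadditive (hX : S.IsGDAttractor X) (hlo : 0 < lo)
    (hi0 : 0 < hi) (hi1 : hi < 1) (hlen : ∀ i e, lo ≤ S.len i e ∧ S.len i e ≤ hi) (hδ₀ : 0 < δ₀)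
    (W : V → (Bool → ℝ) → ℝ)
    (hbase : ∀ v δ j, (∀ i, δ₀ ≤ δ i ∧ δ i ≤ 1 / lo) → 1 ≤ δ j →
      ∃ F : Finset (ℝ × ℝ), IsCover (X v) δ F ∧ (F.card : ℝ) ≤ W v δ)
    (hstep : ∀ v δ, (∀ i, 0 < δ i) →
      ∑ e with S.init e = v, W (S.term e) (S.rescale e δ) ≤ W v δ)
    (v : V) (δ : Bool → ℝ) (hδ : ∀ i, δ₀ ≤ δ i ∧ δ i ≤ 1 / lo) :
    ∃ F : Finset (ℝ × ℝ), IsCover (X v) δ F ∧ (F.card : ℝ) ≤ W v δ := by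
  obtain ⟨n, hn⟩ := exists_pow_lt_of_lt_one hδ₀ hi1
  replace hn : ∀ i, hi ^ n ≤ δ i := fun i => hn.le.trans (hδ i).1
  induction n generalizing v δ with
  | zero => exact hbase v δ false hδ (by simpa using hn false)
  | succ n ih =>
    by_cases hj : ∃ j, 1 ≤ δ j
    · obtain ⟨j, hj⟩ := hj
      exact hbase v δ j hδ hj
    push Not at hj
    have hpos : ∀ i, 0 < δ i := fun i => hδ₀.trans_le (hδ i).1
    choose F hF hcard using fun e => ih (S.term e) (S.rescale e δ)
      ((S.forall_turn e).2 fun i => by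
        rw [rescale_turn]
        refine ⟨(hδ i).1.trans (le_div_self (hpos i).le (S.len_pos i e) (S.len_lt_one i e).le), ?_⟩
        exact div_le_div₀ zero_le_one (hj i).le hlo (hlen i e).1)
      ((S.forall_turn e).2 fun i => by
        rw [rescale_turn, le_div_iff₀ (S.len_pos i e)]
        refine le_trans ?_ (hn i)
        rw [pow_succ]
        gcongr
        exact (hlen i e).2)
    obtain ⟨F', hF', hcard'⟩ := hX.exists_cover_sum (v := v) F fun e _ => hF e
    refine ⟨F', hF', le_trans ?_ (hstep v δ hpos)⟩
    refine (Nat.cast_le.2 hcard').trans ?_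
    rw [Nat.cast_sum]
    exact Finset.sum_le_sum fun e _ => hcard e

lemma IsGDAttractor.exists_packing_ge_of_subadditive (hX : S.IsGDAttractor X) (h : S.ROSC)
    (hi0 : 0 < hi) (hi1 : hi < 1) (hlen : ∀ i e, lo ≤ S.len i e ∧ S.len i e ≤ hi) (hδ₀ : 0 < δ₀)
    (W : V → Bool → (Bool → ℝ) → ℝ)
    (hbase : ∀ v b δ j, (∀ i, δ₀ ≤ δ i ∧ δ i ≤ 1) → lo ≤ δ j →
      ∃ F : Finset (ℝ × ℝ), IsPacking (X v) δ F ∧ W v b δ ≤ F.card)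
    (hstep : ∀ v b δ, (∀ i, 0 < δ i) →
      W v b δ ≤ ∑ e with S.init e = v, W (S.term e) (S.turn e b) (S.rescale e δ))
    (hlo1 : lo ≤ 1) (v : V) (b : Bool) (δ : Bool → ℝ) (hδ : ∀ i, δ₀ ≤ δ i ∧ δ i ≤ 1) :
    ∃ F : Finset (ℝ × ℝ), IsPacking (X v) δ F ∧ W v b δ ≤ F.card := by
  obtain ⟨n, hn⟩ := exists_pow_lt_of_lt_one hδ₀ hi1
  replace hn : ∀ i, hi ^ n ≤ δ i := fun i => hn.le.trans (hδ i).1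
  induction n generalizing v b δ with
  | zero => exact hbase v b δ false hδ (hlo1.trans (by simpa using hn false))
  | succ n ih =>
    by_cases hj : ∃ j, lo ≤ δ j
    · obtain ⟨j, hj⟩ := hj
      exact hbase v b δ j hδ hj
    push Not at hj
    have hpos : ∀ i, 0 < δ i := fun i => hδ₀.trans_le (hδ i).1
    choose F hF hcard using fun e => ih (S.term e) (S.turn e b) (S.rescale e δ)
      ((S.forall_turn e).2 fun i => by
        rw [rescale_turn]
        refine ⟨(hδ i).1.trans (le_div_self (hpos i).le (S.len_pos i e) (S.len_lt_one i e).le), ?_⟩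
        exact (div_le_one (S.len_pos i e)).2 ((hj i).le.trans (hlen i e).1))
      ((S.forall_turn e).2 fun i => by
        rw [rescale_turn, le_div_iff₀ (S.len_pos i e)]
        refine le_trans ?_ (hn i)
        rw [pow_succ]
        gcongr
        exact (hlen i e).2)
    obtain ⟨F', hF', hcard'⟩ := hX.exists_packing_sum h hpos (v := v) F fun e _ => hF e
    refine ⟨F', hF', (hstep v b δ hpos).trans ?_⟩
    rw [hcard', Nat.cast_sum]
    exact Finset.sum_le_sum fun e _ => hcard e

end Recursion

section Counting

variable {V E : Type*} {S : BoxLikeGIFS V E} [Fintype E] [Finite V] [Nonempty E]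
  {X : V → Set (ℝ × ℝ)} {τ : V × Bool → ℝ}

lemma IsGDAttractor.exists_cover_card_le (hX : S.IsGDAttractor X) (h : S.ROSC)
    (hτ : HasExponents (fun j : V × Bool => coord j.2 '' X j.1) τ)
    (hinv : ∀ e i, τ (S.term e, S.turn e i) = τ (S.init e, i)) {s : ℝ} {U : V → Bool → ℝ}
    (hU0 : ∀ v i, 0 < U v i)
    (hU : ∀ v i, ∑ e with S.init e = v,
      S.weight τ s i e * U (S.term e) (S.turn e i) ≤ U v i) {ε : ℝ} (hε : 0 < ε) :
    ∃ C : ℝ, 0 < C ∧ ∀ v d, 0 < d → d ≤ 1 → ∃ F : Finset (ℝ × ℝ),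
      IsCover (X v) (fun _ => d) F ∧ (F.card : ℝ) ≤ C * d ^ (-s - ε) := by
  obtain ⟨lo, hi, hlo0, hlo1, hi0, hi1, hlen⟩ := S.exists_len_bounds
  obtain ⟨C, hC1, hC⟩ := hτ.cover ε hε (1 / lo)
  choose m hm1 hm using fun j : V × Bool => exists_rpow_le_on_Icc zero_lt_one (1 / lo) (s - τ j)
  obtain ⟨M, hM⟩ := Finite.exists_le fun j : V × Bool => m j / U j.1 j.2
  obtain ⟨L, hL⟩ := Finite.exists_le fun j : V × Bool => U j.1 j.2
  have v₀ : V := S.init (Classical.arbitrary E)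
  have hM0 : 0 < M := (div_pos (zero_lt_one.trans_le (hm1 (v₀, false))) (hU0 _ _)).trans_le
    (hM (v₀, false))
  have hL0 : 0 < L := (hU0 _ _).trans_le (hL (v₀, false))
  refine ⟨C * M * (L + L), by positivity, fun v d hd hd1 => ?_⟩
  have hsum : ∀ v δ, (∀ i, 0 < δ i) → ∑ e with S.init e = v,
      C * M * d ^ (-ε) * ∑ b, U (S.term e) b * sideMonomial τ s (S.term e) b (S.rescale e δ) ≤
        C * M * d ^ (-ε) * ∑ b, U v b * sideMonomial τ s v b δ := by
    intro v δ hδ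
    rw [← Finset.mul_sum]
    refine mul_le_mul_of_nonneg_left ?_ (by positivity)
    have hreindex : ∀ e, ∑ b, U (S.term e) b * sideMonomial τ s (S.term e) b (S.rescale e δ) =
        ∑ b, U (S.term e) (S.turn e b) *
          sideMonomial τ s (S.term e) (S.turn e b) (S.rescale e δ) := fun e =>
      (Function.Involutive.bijective (S.turn_turn e)).sum_comp
        (fun b => U (S.term e) b * sideMonomial τ s (S.term e) b (S.rescale e δ)) |>.symm
    simp only [hreindex]
    rw [Finset.sum_comm]
    refine Finset.sum_le_sum fun b _ => ?_
    calc _ = (∑ e with S.init e = v, S.weight τ s b e * U (S.term e) (S.turn e b)) *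
          sideMonomial τ s v b δ := by
          rw [Finset.sum_mul]
          refine Finset.sum_congr rfl fun e he => ?_
          obtain rfl := (Finset.mem_filter.1 he).2
          rw [sideMonomial_rescale (hinv e) s b hδ]
          ring
      _ ≤ _ := mul_le_mul_of_nonneg_right (hU v b) (sideMonomial_pos _ _ _ _ hδ).le
  have hbase : ∀ v (δ : Bool → ℝ) j, (∀ i, d ≤ δ i ∧ δ i ≤ 1 / lo) → 1 ≤ δ j →
      ∃ F : Finset (ℝ × ℝ), IsCover (X v) δ F ∧
        (F.card : ℝ) ≤ C * M * d ^ (-ε) * ∑ b, U v b * sideMonomial τ s v b δ := by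
    intro v δ j hδ hj
    have hpos : ∀ i, 0 < δ i := fun i => hd.trans_le (hδ i).1
    obtain ⟨F, hcard, hF⟩ := hC (v, !j) (δ !j) (hpos _) (hδ _).2
    obtain ⟨F', hF', hcard'⟩ := exists_cover_of_one_le (!j)
      (hX.subset_closure_unitSq h v) (δ := δ) (by simpa using hj) hF
    refine ⟨F', hF', (Nat.cast_le.2 hcard').trans (hcard.trans ?_)⟩
    have hle : U v (!j) * sideMonomial τ s v (!j) δ ≤ ∑ b, U v b * sideMonomial τ s v b δ :=
      Finset.single_le_sum
        (fun b _ => mul_nonneg (hU0 v b).le (sideMonomial_pos τ s v b hpos).le) (Finset.mem_univ _)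
    have hδε : (δ !j) ^ (-ε) ≤ d ^ (-ε) :=
      Real.rpow_le_rpow_of_nonpos hd (hδ _).1 (by linarith)
    have hone : 1 ≤ M * (U v (!j) * δ j ^ (-(s - τ (v, !j)))) := by
      have h1 := hM (v, !j)
      have h2 := hm (v, !j) (δ j) ⟨hj, (hδ j).2⟩
      rw [div_le_iff₀ (hU0 _ _)] at h1
      rw [← mul_assoc, Real.rpow_neg (hpos j).le, ← div_eq_mul_inv,
        one_le_div (Real.rpow_pos_of_pos (hpos j) _)]
      exact h2.trans h1
    have hp1 := Real.rpow_pos_of_pos (hpos !j) (-τ (v, !j))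
    calc C * (δ !j) ^ (-τ (v, !j) - ε)
        = C * (δ !j) ^ (-ε) * (δ !j) ^ (-τ (v, !j)) := by
          rw [mul_assoc, ← Real.rpow_add (hpos _)]
          congr 2
          ring
      _ ≤ C * d ^ (-ε) * (δ !j) ^ (-τ (v, !j)) := by gcongr
      _ ≤ C * d ^ (-ε) * (δ !j) ^ (-τ (v, !j)) *
          (M * (U v (!j) * δ j ^ (-(s - τ (v, !j))))) :=
          le_mul_of_one_le_right (by positivity) hone
      _ = C * M * d ^ (-ε) * (U v (!j) * sideMonomial τ s v (!j) δ) := by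
          rw [sideMonomial, Bool.not_not]
          ring
      _ ≤ _ := by gcongr
  obtain ⟨F, hF, hcard⟩ := hX.exists_cover_le_of_superadditive hlo0 hi0 hi1 hlen hd
    _ hbase hsum v (fun _ => d) (fun _ => ⟨le_rfl, hd1.trans (one_le_one_div hlo0 hlo1.le)⟩)
  refine ⟨F, hF, hcard.trans ?_⟩
  simp only [sideMonomial_const _ _ _ _ hd, Fintype.sum_bool, ← add_mul]
  calc C * M * d ^ (-ε) * ((U v true + U v false) * d ^ (-s))
      ≤ C * M * d ^ (-ε) * ((L + L) * d ^ (-s)) := by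
        gcongr
        · exact hL (v, true)
        · exact hL (v, false)
    _ = _ := by rw [sub_eq_add_neg, Real.rpow_add hd]; ring

lemma IsGDAttractor.exists_packing_card_ge (hX : S.IsGDAttractor X) (h : S.ROSC)
    (hτ : HasExponents (fun j : V × Bool => coord j.2 '' X j.1) τ)
    {σ : V × Bool → ℝ} (hinv : ∀ e i, σ (S.term e, S.turn e i) = σ (S.init e, i)) {s κ : ℝ}
    (hκ0 : 0 ≤ κ) (hστ : ∀ v b, σ (v, b) ≤ τ (v, b) + κ)
    (hστ' : ∀ v b, s - σ (v, b) ≤ τ (v, !b) + κ)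
    {H : V → Bool → ℝ} (hH0 : ∀ v i, 0 ≤ H v i)
    (hH : ∀ v i, H v i ≤ ∑ e with S.init e = v,
      S.weight σ s i e * H (S.term e) (S.turn e i)) {ε : ℝ} (hε : 0 < ε) :
    ∃ c : ℝ, 0 < c ∧ ∀ v b d (δ : Bool → ℝ), 0 < d → (∀ i, d ≤ δ i ∧ δ i ≤ 1) →
      ∃ F : Finset (ℝ × ℝ), IsPacking (X v) δ F ∧
        c * d ^ (κ + ε) * (H v b * sideMonomial σ s v b δ) ≤ F.card := by
  obtain ⟨lo, hi, hlo0, hlo1, hi0, hi1, hlen⟩ := S.exists_len_bounds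
  obtain ⟨C, hC1, hC⟩ := hτ.packing ε hε
  obtain ⟨M, hM1, hM⟩ := exists_sideMonomial_le σ s hlo0
  obtain ⟨L, hL⟩ := Finite.exists_le fun j : V × Bool => H j.1 j.2
  have hL1 : 0 < max 1 L := zero_lt_one.trans_le (le_max_left _ _)
  refine ⟨(C * (max 1 L * M))⁻¹, by positivity, fun v b d δ hd hδ => ?_⟩
  refine hX.exists_packing_ge_of_subadditive h hi0 hi1 hlen hd
    (fun v b δ => (C * (max 1 L * M))⁻¹ * d ^ (κ + ε) * (H v b * sideMonomial σ s v b δ))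
    ?_ ?_ hlo1.le v b δ hδ
  · intro v b δ j hδ hj
    have hpos : ∀ i, 0 < δ i := fun i => hd.trans_le (hδ i).1
    obtain ⟨F, hcard, h1, h2, h3⟩ := hC (v, !j) (δ !j) (hpos _) (hδ _).2
    obtain ⟨F', hF', hcard'⟩ := exists_packing_of_coord (!j)
      (hX.subset_closure_unitSq h v) (δ := δ) (by simpa using hpos j)
      (by simpa using (hδ j).2) h1 h2 h3
    refine ⟨F', hF', ?_⟩
    rw [hcard', mul_assoc, inv_mul_le_iff₀ (by positivity)]
    have hmon := hM v b δ (!j) (fun i => ⟨hpos i, (hδ i).2⟩) (by simpa using hj)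
    have hexp : -(τ (v, !j) + κ) ≤ -(if (!j) = b then σ (v, b) else s - σ (v, b)) := by
      split_ifs with hb
      · rw [hb]
        linarith [hστ v b]
      · have hb' : (!b) = !j := by revert hb; cases j <;> cases b <;> simp
        have := hστ' v b
        rw [hb'] at this
        linarith
    have hexp' := Real.rpow_le_rpow_of_exponent_ge (hpos !j) (hδ !j).2 hexp
    have hdδ : d ^ (κ + ε) ≤ (δ !j) ^ (κ + ε) :=
      Real.rpow_le_rpow hd.le (hδ _).1 (by positivity)
    have hp := Real.rpow_pos_of_pos (hpos !j) (-(τ (v, !j) + κ))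
    have hHL : H v b ≤ max 1 L := (hL (v, b)).trans (le_max_right _ _)
    calc d ^ (κ + ε) * (H v b * sideMonomial σ s v b δ)
        ≤ (δ !j) ^ (κ + ε) * (max 1 L * (M * (δ !j) ^ (-(τ (v, !j) + κ)))) := by
          have := (sideMonomial_pos σ s v b hpos).le
          refine mul_le_mul hdδ (mul_le_mul hHL (hmon.trans ?_) this hL1.le)
            (mul_nonneg (hH0 v b) this) (hdδ.trans' (by positivity))
          gcongr
      _ = max 1 L * M * (δ !j) ^ (-τ (v, !j) + ε) := by
          rw [show -τ (v, !j) + ε = (κ + ε) + -(τ (v, !j) + κ) by ring,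
            Real.rpow_add (hpos _) (κ + ε)]
          ring
      _ ≤ max 1 L * M * (C * F.card) := by gcongr
      _ = _ := by ring
  · intro v b δ hδ
    rw [← Finset.mul_sum]
    refine mul_le_mul_of_nonneg_left ?_ (by positivity)
    calc H v b * sideMonomial σ s v b δ
        ≤ (∑ e with S.init e = v, S.weight σ s b e * H (S.term e) (S.turn e b)) *
          sideMonomial σ s v b δ :=
          mul_le_mul_of_nonneg_right (hH v b) (sideMonomial_pos _ _ _ _ hδ).le
      _ = _ := by
          rw [Finset.sum_mul]
          refine Finset.sum_congr rfl fun e he => ?_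
          obtain rfl := (Finset.mem_filter.1 he).2
          rw [sideMonomial_rescale (hinv e) s b hδ]
          ring

end Counting

end BoxLikeGIFS

namespace BoxLikeGIFS

variable {V E : Type*} {S : BoxLikeGIFS V E}

/-- Raising both exponents by `η` does not decrease the weights as long as `γ - t` is large. -/
lemma exists_shift_weight_le {τ : V × Bool → ℝ} {γ t lo hi : ℝ} (hγ : t < γ) (hlo0 : 0 < lo)
    (hlo1 : lo < 1) (hi0 : 0 < hi) (hi1 : hi < 1)
    (hlen : ∀ i e, lo ≤ S.len i e ∧ S.len i e ≤ hi) :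
    ∃ η > 0, ∀ i e, S.weight τ γ i e ≤ S.weight (fun j => τ j + η) (t + 2 * η) i e := by
  have hl := Real.log_neg hlo0 hlo1
  have hh := Real.log_neg hi0 hi1
  have hsum : Real.log lo + Real.log hi < 0 := by linarith
  have hη0 : 0 < (γ - t) * Real.log hi / (Real.log lo + Real.log hi) :=
    div_pos_of_neg_of_neg (mul_neg_of_pos_of_neg (sub_pos.2 hγ) hh) hsum
  refine ⟨(γ - t) * Real.log hi / (Real.log lo + Real.log hi), hη0, fun i e => ?_⟩
  set η := (γ - t) * Real.log hi / (Real.log lo + Real.log hi) with hη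
  have hmul : η * (Real.log lo + Real.log hi) = (γ - t) * Real.log hi :=
    div_mul_cancel₀ _ hsum.ne
  have hηle : η - (γ - t) ≤ 0 := by
    by_contra! hcon
    nlinarith
  have h1 : lo ^ η ≤ S.len i e ^ η := Real.rpow_le_rpow hlo0.le (hlen i e).1 hη0.le
  have h2 : hi ^ (η - (γ - t)) ≤ S.len (!i) e ^ (η - (γ - t)) :=
    Real.rpow_le_rpow_of_nonpos (S.len_pos _ _) (hlen _ e).2 hηle
  have h3 : lo ^ η * hi ^ (η - (γ - t)) = 1 := by
    rw [Real.rpow_def_of_pos hlo0, Real.rpow_def_of_pos hi0, ← Real.exp_add, Real.exp_eq_one_iff]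
    linarith
  have h4 : 1 ≤ S.len i e ^ η * S.len (!i) e ^ (η - (γ - t)) :=
    h3.ge.trans (mul_le_mul h1 h2 (by positivity)
      (Real.rpow_nonneg (S.len_pos _ _).le _))
  calc S.weight τ γ i e
      ≤ S.weight τ γ i e * (S.len i e ^ η * S.len (!i) e ^ (η - (γ - t))) :=
        le_mul_of_one_le_right (S.weight_pos _ _ _ _).le h4
    _ = _ := by
        unfold weight
        rw [mul_mul_mul_comm, ← Real.rpow_add (S.len_pos _ _), ← Real.rpow_add (S.len_pos _ _)]
        congr 2
        ring

variable [Fintype E] [Nonempty E] {X : V → Set (ℝ × ℝ)} {τ : V × Bool → ℝ} {γ t : ℝ}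
  {H : V → Bool → ℝ}

/-- Lower power-law bound for the packings of `X` by boxes of bounded eccentricity. -/
def HasPackingBound (X : Set (ℝ × ℝ)) (γ : ℝ) : Prop :=
  ∀ ε > 0, ∀ R : ℝ, 1 ≤ R → ∃ c > 0, ∃ η > 0, ∀ d, 0 < d → d < η → ∀ δ : Bool → ℝ,
    (∀ i, d ≤ δ i ∧ δ i ≤ R * d) → ∃ F : Finset (ℝ × ℝ), IsPacking X δ F ∧
      c * d ^ (-γ + ε) ≤ F.card

lemma IsGDAttractor.hasPackingBound_init (hX : S.IsGDAttractor X) (h : S.ROSC) {e : E}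
    (hT : HasPackingBound (X (S.term e)) γ) : HasPackingBound (X (S.init e)) γ := by
  intro ε hε R hR
  obtain ⟨lo, hi, hlo0, hlo1, hi0, hi1, hlen⟩ := S.exists_len_bounds
  obtain ⟨c, hc, η, hη, hT⟩ := hT ε hε (R / lo)
    ((one_le_div hlo0).2 (hlo1.le.trans hR))
  refine ⟨c, hc, η, hη, fun d hd hdη δ hδ => ?_⟩
  have hpos : ∀ i, 0 < δ i := fun i => hd.trans_le (hδ i).1
  obtain ⟨F, hF, hcard⟩ := hT d hd hdη (S.rescale e δ) ((S.forall_turn e).2 fun i => by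
    rw [rescale_turn]
    refine ⟨(hδ i).1.trans (le_div_self (hpos i).le (S.len_pos i e) (S.len_lt_one i e).le), ?_⟩
    rw [div_mul_eq_mul_div]
    exact div_le_div₀ (by positivity) (hδ i).2 hlo0 (hlen i e).1)
  obtain ⟨F', hF', hcard'⟩ := hX.exists_packing_of_term h hpos hF
  exact ⟨F', hF', by rwa [hcard']⟩

lemma IsGDAttractor.hasPackingBound (hX : S.IsGDAttractor X) (h : S.ROSC)
    (hSC : S.StronglyConnected) {v₀ : V} (hT : HasPackingBound (X v₀) γ) (v : V) :
    HasPackingBound (X v) γ := by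
  refine Relation.TransGen.head_induction_on (motive := fun v _ => HasPackingBound (X v) γ)
    (hSC v v₀) ?_ ?_
  · rintro _ ⟨e, rfl, rfl⟩
    exact hX.hasPackingBound_init h hT
  · rintro _ _ ⟨e, rfl, rfl⟩ _ ih
    exact hX.hasPackingBound_init h ih

variable [Finite V]

lemma IsGDAttractor.le_of_subharmonic (hX : S.IsGDAttractor X) (h : S.ROSC)
    (hτ : HasExponents (fun j : V × Bool => coord j.2 '' X j.1) τ)
    (hinv : ∀ e i, τ (S.term e, S.turn e i) = τ (S.init e, i))
    (ht : ∀ v i, τ (v, i) + τ (v, !i) = t) (hH0 : ∀ v i, 0 ≤ H v i)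
    (hH : ∀ v i, H v i ≤ ∑ e with S.init e = v,
      S.weight τ γ i e * H (S.term e) (S.turn e i)) {v : V} {b : Bool} (hv : 0 < H v b) :
    γ ≤ t := by
  by_contra! hlt
  obtain ⟨lo, hi, hlo0, hlo1, hi0, hi1, hlen⟩ := S.exists_len_bounds
  obtain ⟨η, hη, hw⟩ := exists_shift_weight_le (τ := τ) hlt hlo0 hlo1 hi0 hi1 hlen
  obtain ⟨c, hc, hpack⟩ := hX.exists_packing_card_ge h hτ (σ := fun j => τ j + η)
    (s := t + 2 * η) (κ := η) (fun e i => by rw [hinv]) hη.le (fun v b => le_rfl)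
    (fun v b => by linarith [ht v b]) hH0
    (fun v i => (hH v i).trans (Finset.sum_le_sum fun e _ =>
      mul_le_mul_of_nonneg_right (hw i e) (hH0 _ _))) (by positivity : 0 < η / 4)
  obtain ⟨C, hC1, hC⟩ := hτ.cover (η / 4) (by positivity) 1
  have key : t + 3 * η / 4 ≤ t + η / 2 := by
    refine exponent_le_of_forall_rpow_le (A := c * H v b) (B := 9 * (25 * (C * C)))
      (by positivity) zero_lt_one fun d hd hd1 => ?_
    obtain ⟨P, hP, hPcard⟩ := hpack v b d (fun _ => d) hd fun _ => ⟨le_rfl, hd1.le⟩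
    choose F hFcard hF using fun i => hC (v, i) d hd hd1.le
    obtain ⟨Q, hQ, hQcard⟩ := exists_cover_product (Z := X v) (δ := fun _ => d) (F := F) hF
    have h1 := hP.card_le hd (boxSet_finite hd hQ)
    have h2 := hQ.boxCount_le hd
    have h3 : (Q.card : ℝ) ≤ C * C * d ^ (-(t + η / 2)) := by
      rw [hQcard, Nat.cast_mul]
      refine (mul_le_mul (hFcard false) (hFcard true) (by positivity) (by positivity)).trans_eq ?_
      rw [mul_mul_mul_comm, ← Real.rpow_add hd]
      congr 2
      have := ht v false
      rw [Bool.not_false] at this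
      linarith
    rw [sideMonomial_const _ _ _ _ hd] at hPcard
    calc c * H v b * d ^ (-(t + 3 * η / 4))
        = c * d ^ (η + η / 4) * (H v b * d ^ (-(t + 2 * η))) := by
          rw [show -(t + 3 * η / 4) = (η + η / 4) + -(t + 2 * η) by ring,
            Real.rpow_add hd (η + η / 4)]
          ring
      _ ≤ P.card := hPcard
      _ ≤ 9 * (25 * (C * C * d ^ (-(t + η / 2)))) := by linarith
      _ = _ := by ring
  linarith

lemma IsGDAttractor.hasPackingBound_of_pos (hX : S.IsGDAttractor X) (h : S.ROSC)
    (hτ : HasExponents (fun j : V × Bool => coord j.2 '' X j.1) τ)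
    (hinv : ∀ e i, τ (S.term e, S.turn e i) = τ (S.init e, i))
    (ht : ∀ v i, τ (v, i) + τ (v, !i) = t) (hH0 : ∀ v i, 0 ≤ H v i)
    (hH : ∀ v i, H v i ≤ ∑ e with S.init e = v,
      S.weight τ γ i e * H (S.term e) (S.turn e i)) {v : V} {b : Bool} (hv : 0 < H v b) :
    HasPackingBound (X v) γ := by
  intro ε hε R hR
  have hγ := hX.le_of_subharmonic h hτ hinv ht hH0 hH hv
  obtain ⟨c, hc, hpack⟩ := hX.exists_packing_card_ge h hτ (κ := 0) hinv le_rfl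
    (fun v b => by simp) (fun v b => by linarith [ht v b]) hH0 hH hε
  obtain ⟨k, hk, hmon⟩ := exists_le_sideMonomial τ γ v b R
  refine ⟨c * (H v b * k), by positivity, 1 / R, by positivity, fun d hd hdR δ hδ => ?_⟩
  rw [lt_div_iff₀' (by positivity)] at hdR
  obtain ⟨F, hF, hcard⟩ := hpack v b d δ hd fun i => ⟨(hδ i).1, (hδ i).2.trans hdR.le⟩
  refine ⟨F, hF, le_trans ?_ hcard⟩
  calc c * (H v b * k) * d ^ (-γ + ε)
      = c * d ^ (0 + ε) * (H v b * (k * d ^ (-γ))) := by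
        rw [zero_add, Real.rpow_add hd]
        ring
    _ ≤ _ := by
        gcongr
        exact hmon d hd δ hδ

end BoxLikeGIFS

lemma hasBoxDim_of_bounds {X : Set (ℝ × ℝ)} {γ : ℝ}
    (hlow : ∀ ε > 0, ∃ c > 0, ∀ᶠ d in nhdsWithin (0 : ℝ) (Ioi 0),
      c * d ^ (-γ + ε) ≤ boxCount X d)
    (hup : ∀ ε > 0, ∃ C > 0, ∀ᶠ d in nhdsWithin (0 : ℝ) (Ioi 0),
      (boxCount X d : ℝ) ≤ C * d ^ (-γ - ε)) : HasBoxDim X γ := by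
  have hL : Tendsto (fun d => -Real.log d) (nhdsWithin 0 (Ioi 0)) atTop :=
    tendsto_neg_atBot_atTop.comp Real.tendsto_log_nhdsGT_zero
  refine Metric.tendsto_nhds.2 fun ε hε => ?_
  obtain ⟨c, hc, hlow⟩ := hlow (ε / 2) (half_pos hε)
  obtain ⟨C, hC, hup⟩ := hup (ε / 2) (half_pos hε)
  filter_upwards [hlow, hup, hL.eventually_gt_atTop 0, self_mem_nhdsWithin,
    hL.eventually_gt_atTop (-Real.log c / (ε / 2)), hL.eventually_gt_atTop (Real.log C / (ε / 2))]
    with d h1 h2 h3 hd h4 h5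
  have hd : 0 < d := hd
  have hp := Real.rpow_pos_of_pos hd
  have hN : 0 < (boxCount X d : ℝ) := (mul_pos hc (hp _)).trans_le h1
  rw [div_lt_iff₀ (by positivity)] at h4 h5
  have l1 := Real.log_le_log (mul_pos hc (hp _)) h1
  have l2 := Real.log_le_log hN h2
  rw [Real.log_mul hc.ne' (hp _).ne', Real.log_rpow hd] at l1
  rw [Real.log_mul hC.ne' (hp _).ne', Real.log_rpow hd] at l2
  rw [Real.dist_eq, abs_lt, lt_sub_iff_add_lt, sub_lt_iff_lt_add, lt_div_iff₀ h3, div_lt_iff₀ h3]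
  constructor <;> linarith

end LqGIFS

/-- box dimensions, general setting.  For a strongly connected planar
box-like self-affine GIFS satisfying the ROSC, the box dimension of every carpet `X_v`
exists and equals `γ̂(0)`. -/
theorem statement7
    {V E : Type} [Fintype V] [Fintype E] [Nonempty V]
    (S : BoxLikeGIFS V E) (hSC : S.StronglyConnected) (hROSC : S.ROSC)
    (X : V → Set (ℝ × ℝ)) (hX : S.IsGDAttractor X)
    (p : E → ℝ) (hp : S.IsWeights p)
    (μ : V → Measure (ℝ × ℝ)) (hμ : S.IsGDMeasure p μ)
    (τx τy : V → ℝ)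
    (hτx : ∀ v : V, HasLq1 ((μ v).map Prod.fst) 0 (τx v))
    (hτy : ∀ v : V, HasLq1 ((μ v).map Prod.snd) 0 (τy v))
    (t0 : ℝ) (ht0 : ∀ v : V, τx v + τy v = t0)
    (γhat : ℝ)
    (hγhat : specRad (S.Gmat p τx τy 0 0 γhat) = 1) :
    ∀ v : V, HasBoxDim (X v) γhat := by
  have hE : Nonempty E := ⟨(S.edge_exists (Classical.arbitrary V)).choose⟩
  have hτ : HasExponents (fun j : V × Bool => coord j.2 '' X j.1) (pairExponent τx τy) := by
    refine hasExponents_of_hasLq1 (ν := fun j => (μ j.1).map (coord j.2))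
      (fun j => BoxLikeGIFS.isCarrier_map_coord hROSC hX hp hμ j.1 j.2) ?_
    rintro ⟨v, _ | _⟩
    · exact hτx v
    · exact hτy v
  have ht : ∀ v i, pairExponent τx τy (v, i) + pairExponent τx τy (v, !i) = t0 := by
    rintro v (_ | _)
    · exact ht0 v
    · exact (add_comm _ _).trans (ht0 v)
  have hinv := BoxLikeGIFS.exponent_term_eq hX hτ ht
  obtain ⟨H, hH0, ⟨v₀, b₀, hpos⟩, hH⟩ := S.exists_subharmonic hγhat
  have hcover : ∀ ε > 0, ∃ C > 0, ∀ v d, 0 < d → d ≤ 1 → ∃ F : Finset (ℝ × ℝ),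
      IsCover (X v) (fun _ => d) F ∧ (F.card : ℝ) ≤ C * d ^ (-γhat - ε) := by
    intro ε hε
    obtain ⟨U, hU0, hU⟩ := S.exists_superharmonic hγhat (lt_add_of_pos_right γhat (half_pos hε))
    obtain ⟨C, hC, hF⟩ := hX.exists_cover_card_le hROSC hτ hinv hU0 hU (half_pos hε)
    refine ⟨C, hC, fun v d hd hd1 => ?_⟩
    rw [show -γhat - ε = -(γhat + ε / 2) - ε / 2 by ring]
    exact hF v d hd hd1
  have hpack := hX.hasPackingBound hROSC hSC
    (hX.hasPackingBound_of_pos hROSC hτ hinv ht hH0 hH hpos)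
  intro v
  refine hasBoxDim_of_bounds (fun ε hε => ?_) fun ε hε => ?_
  · obtain ⟨c, hc, η, hη, hF⟩ := hpack v ε hε 1 le_rfl
    obtain ⟨C, -, hQ⟩ := hcover ε hε
    refine ⟨c / 9, by positivity, ?_⟩
    filter_upwards [Ioo_mem_nhdsGT (lt_min hη zero_lt_one)] with d hd
    obtain ⟨F, hF, hcard⟩ := hF d hd.1 (hd.2.trans_le (min_le_left _ _)) (fun _ => d)
      fun _ => ⟨le_rfl, (one_mul d).ge⟩
    obtain ⟨Q, hQ, -⟩ := hQ v d hd.1 (hd.2.trans_le (min_le_right _ _)).le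
    have := hF.card_le hd.1 (boxSet_finite hd.1 hQ)
    rw [div_mul_eq_mul_div, div_le_iff₀ (by norm_num)]
    linarith
  · obtain ⟨C, hC, hQ⟩ := hcover ε hε
    refine ⟨25 * C, by positivity, ?_⟩
    filter_upwards [Ioo_mem_nhdsGT (zero_lt_one (α := ℝ))] with d hd
    obtain ⟨Q, hQ, hcard⟩ := hQ v d hd.1 hd.2.le
    have := hQ.boxCount_le hd.1
    linarith
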